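/- arXiv:1104.2716 — 5 statements merged into one kernel-verified Lean document; each statement's English description precedes it below -/
import Mathlib

section
/- Let A be an infinite set of positive integers and let m = {(k_1,m_1),...,(k_r,m_r)} be a configuration whose degree s = gcd(m_1,...,m_r) satisfies s ≥ 2. Then for every polynomial q with rational coefficients of degree at most s−2, it is not the case that r_m(n,A) = q(n) for all sufficiently large n. -/
/-- The representation function `r_m(n, A)` associated to the configuration
`{(k 0, m 0), ..., (k (r-1), m (r-1))}`: the number of tuples `(a i j)` with
all entries in `A` and `n = ∑ i, k i * (a i 0 + ... + a i (m i - 1))`. -/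
noncomputable def reprFn (A : Set ℕ) (r : ℕ) (k m : Fin r → ℕ) (n : ℕ) : ℕ :=
  Nat.card {a : (i : Fin r) → Fin (m i) → ℕ //
    (∀ i j, a i j ∈ A) ∧ n = ∑ i, k i * ∑ j, a i j}

/-!
If `s = gcd (m_1, ..., m_r)`, the generating function of `r_m(·, A)` is `G ^ s`, where `G` is a
product of powers of the series `∑ a ∈ A, X ^ (k_i * a)` and hence has coefficients in `ℕ`.

Suppose that `G ^ s` is rational and that its coefficients are `o(n ^ (s - 1))`; quasi-polynomials
of degree at most `s - 2` satisfy both conditions. Taking logarithmic derivatives shows that `G`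
solves a linear differential equation `U * X * G' = V * G` with polynomial coefficients. Its
coefficients therefore satisfy a recurrence, and for some `D`, any `D` consecutive zero coefficients
far enough out force all later ones to vanish. If no such gap occurred, the partial sums of `G`
would grow at least linearly, and those of `G ^ s` at least like `n ^ s`, contradicting the growth
hypothesis. So `G`, and with it `G ^ s`, is a polynomial, whereas an infinite `A` represents
arbitrarily large integers.
-/

open Asymptotics Filter Finset
open PowerSeries (coeff)
open scoped Polynomial PowerSeries

section

variable {R S : Type*} [CommRing S] [IsDomain S] [CharZero S]

lemma coeff_X_mul_derivative [CommSemiring R] (F : R⟦X⟧) (n : ℕ) :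
    coeff n (PowerSeries.X * d⁄dX R F) = n * coeff n F := by
  cases n with
  | zero => simp
  | succ n =>
    rw [PowerSeries.coeff_succ_X_mul, PowerSeries.coeff_derivative, mul_comm]
    push_cast
    rfl

lemma eventually_coeff_eq_zero_iff [Semiring R] {F : R⟦X⟧} :
    (∀ᶠ n in atTop, coeff n F = 0) ↔ ∃ P : R[X], (P : R⟦X⟧) = F := by
  constructor
  · intro h
    obtain ⟨N, hN⟩ := eventually_atTop.1 h
    refine ⟨PowerSeries.trunc N F, PowerSeries.ext fun n ↦ ?_⟩
    rw [Polynomial.coeff_coe, PowerSeries.coeff_trunc]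
    split_ifs with hn
    · rfl
    · exact (hN n (not_lt.1 hn)).symm
  · rintro ⟨P, rfl⟩
    filter_upwards [eventually_gt_atTop P.natDegree] with n hn
    rw [Polynomial.coeff_coe, Polynomial.coeff_eq_zero_of_natDegree_lt hn]

lemma exists_ode_of_pow_mul_eq {G : S⟦X⟧} {s : ℕ} {E P : S[X]} (hE : E ≠ 0)
    (hP : G ^ (s + 1) * E = P) :
    ∃ U V : S[X], U ≠ 0 ∧ (U : S⟦X⟧) * (PowerSeries.X * d⁄dX S G) = (V : S⟦X⟧) * G := by
  rcases eq_or_ne G 0 with rfl | hG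
  · exact ⟨1, 0, one_ne_zero, by simp⟩
  have hP0 : P ≠ 0 := by
    rintro rfl
    exact mul_ne_zero (pow_ne_zero _ hG) (Polynomial.coe_eq_zero_iff.not.2 hE)
      (hP.trans Polynomial.coe_zero)
  refine ⟨Polynomial.C (s + 1 : S) * E * P,
    Polynomial.X * (E * Polynomial.derivative P - Polynomial.derivative E * P),
    mul_ne_zero (mul_ne_zero (Polynomial.C_ne_zero.2 s.cast_add_one_ne_zero) hE) hP0, ?_⟩
  have hderiv := congrArg (d⁄dX S) hP
  rw [Derivation.leibniz, PowerSeries.derivative_pow, PowerSeries.derivative_coe,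
    PowerSeries.derivative_coe, Nat.add_sub_cancel] at hderiv
  simp only [smul_eq_mul] at hderiv
  push_cast at hderiv ⊢
  rw [← hderiv, ← hP, map_add, map_natCast, map_one]
  ring

lemma sum_antidiagonal_eq_zero_of_ode [CommRing R] {U V : R[X]} {G : R⟦X⟧}
    (hode : (U : R⟦X⟧) * (PowerSeries.X * d⁄dX R G) = (V : R⟦X⟧) * G) (n : ℕ) :
    ∑ p ∈ antidiagonal n, (U.coeff p.1 * p.2 - V.coeff p.1) * coeff p.2 G = 0 := by
  have hcoeff := congrArg (coeff n) hode
  rw [PowerSeries.coeff_mul, PowerSeries.coeff_mul, ← sub_eq_zero, ← sum_sub_distrib] at hcoeff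
  rw [← hcoeff]
  refine sum_congr rfl fun p _ ↦ ?_
  rw [coeff_X_mul_derivative, Polynomial.coeff_coe, Polynomial.coeff_coe]
  ring

lemma eventually_mul_natCast_ne {u v : S} (h : u ≠ 0 ∨ v ≠ 0) :
    ∀ᶠ n : ℕ in atTop, u * n ≠ v := by
  rcases eq_or_ne u 0 with rfl | hu
  · exact .of_forall fun n ↦ by simpa using (h.resolve_left (by simp)).symm
  · have hsub : {n : ℕ | u * n = v}.Subsingleton := fun a ha b hb ↦
      Nat.cast_injective (mul_left_cancel₀ hu (ha.trans hb.symm))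
    rw [← Nat.cofinite_eq_atTop]
    exact hsub.finite.eventually_cofinite_notMem

lemma exists_eventually_coeff_eq_zero_of_gap {U V : S[X]} {G : S⟦X⟧} (hU : U ≠ 0)
    (hode : (U : S⟦X⟧) * (PowerSeries.X * d⁄dX S G) = (V : S⟦X⟧) * G) :
    ∃ D, ∀ᶠ n in atTop, (∀ b ∈ Ico n (n + D), coeff b G = 0) → coeff (n + D) G = 0 := by
  classical
  have hex : ∃ a, U.coeff a ≠ 0 ∨ V.coeff a ≠ 0 :=
    (Polynomial.support_nonempty.2 hU).imp fun a ha ↦ .inl (Polynomial.mem_support_iff.1 ha)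
  obtain ⟨j, hj, hmin⟩ : ∃ j, (U.coeff j ≠ 0 ∨ V.coeff j ≠ 0) ∧
      ∀ a < j, U.coeff a = 0 ∧ V.coeff a = 0 :=
    ⟨Nat.find hex, Nat.find_spec hex, fun a ha ↦ by simpa using Nat.find_min hex ha⟩
  set D := max U.natDegree V.natDegree
  refine ⟨D, ?_⟩
  -- For large `n`, the term of lowest order `j` solves the recurrence for the coefficient `n + D`.
  have hlead := (tendsto_add_atTop_nat D).eventually (eventually_mul_natCast_ne hj)
  filter_upwards [hlead] with n hn hgap
  have hrec := sum_antidiagonal_eq_zero_of_ode hode (j + (n + D))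
  rw [sum_eq_single (j, n + D)] at hrec
  · exact (mul_eq_zero.1 hrec).resolve_left (sub_ne_zero.2 hn)
  · rintro ⟨a, b⟩ hab hne
    rw [HasAntidiagonal.mem_antidiagonal] at hab
    obtain haj | rfl | haj := lt_trichotomy a j
    · simp [hmin a haj]
    · exact absurd (congrArg (Prod.mk a) (Nat.add_left_cancel hab)) hne
    obtain haD | haD := lt_or_ge D a
    · have hUa := Polynomial.coeff_eq_zero_of_natDegree_lt ((le_max_left _ _).trans_lt haD)
      have hVa := Polynomial.coeff_eq_zero_of_natDegree_lt ((le_max_right _ _).trans_lt haD)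
      simp [hUa, hVa]
    · rw [hgap b (mem_Ico.2 (by dsimp only at hab; lia)), mul_zero]
  · simp

lemma forall_ge_eq_zero_of_gap [Zero R] {g : ℕ → R} {n D : ℕ}
    (hstep : ∀ m ≥ n, (∀ b ∈ Ico m (m + D), g b = 0) → g (m + D) = 0)
    (hgap : ∀ b ∈ Ico n (n + D), g b = 0) : ∀ b ≥ n, g b = 0 := by
  intro b
  induction b using Nat.strong_induction_on with
  | _ b ih =>
    intro hb
    obtain hbD | hbD := lt_or_ge b (n + D)
    · exact hgap b (mem_Ico.2 ⟨hb, hbD⟩)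
    · obtain ⟨m, rfl⟩ := Nat.exists_eq_add_of_le' (le_of_add_le_right hbD)
      refine hstep m (by lia) fun c hc ↦ ih c (mem_Ico.1 hc).2 ?_
      have := (mem_Ico.1 hc).1
      lia

lemma sum_coeff_mul_sum_coeff_le [Semiring R] [PartialOrder R] [IsOrderedRing R]
    [CanonicallyOrderedAdd R] (F G : R⟦X⟧) (M N : ℕ) :
    (∑ i ∈ range (M + 1), coeff i F) * (∑ j ∈ range (N + 1), coeff j G) ≤
      ∑ n ∈ range (M + N + 1), coeff n (F * G) := by
  have hmaps : ∀ p ∈ range (M + 1) ×ˢ range (N + 1), p.1 + p.2 ∈ range (M + N + 1) := by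
    intro p hp
    simp only [mem_product, mem_range] at hp ⊢
    lia
  rw [sum_mul_sum, ← sum_product', ← sum_fiberwise_of_maps_to hmaps]
  refine sum_le_sum fun n _ ↦ ?_
  rw [PowerSeries.coeff_mul]
  refine sum_le_sum_of_subset fun p hp ↦ ?_
  exact mem_antidiagonal.2 (mem_filter.1 hp).2

lemma sum_coeff_pow_le [Semiring R] [PartialOrder R] [IsOrderedRing R]
    [CanonicallyOrderedAdd R] (F : R⟦X⟧) (N s : ℕ) :
    (∑ i ∈ range (N + 1), coeff i F) ^ s ≤ ∑ n ∈ range (s * N + 1), coeff n (F ^ s) := by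
  induction s with
  | zero => simp
  | succ s ih =>
    rw [pow_succ, pow_succ, add_mul, one_mul]
    exact (mul_le_mul_left ih _).trans (sum_coeff_mul_sum_coeff_le _ _ _ _)

lemma le_add_mul_sum_range {g : ℕ → ℕ} {M D : ℕ}
    (h : ∀ n ≥ M, ∃ b ∈ Ico n (n + D), g b ≠ 0) (n : ℕ) :
    n ≤ M + D + D * ∑ i ∈ range n, g i := by
  induction n using Nat.strong_induction_on with
  | _ n ih =>
    obtain hn | hn := le_or_gt n (M + D)
    · exact hn.trans (Nat.le_add_right _ _)
    obtain ⟨b, hb, hgb⟩ := h (n - D) (by lia)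
    rw [mem_Ico] at hb
    have hstep : ∑ i ∈ range (n - D), g i + 1 ≤ ∑ i ∈ range n, g i := calc
      _ ≤ ∑ i ∈ range b, g i + g b :=
        add_le_add (sum_le_sum_of_subset (range_mono hb.1)) (Nat.one_le_iff_ne_zero.2 hgb)
      _ = ∑ i ∈ range (b + 1), g i := (sum_range_succ g b).symm
      _ ≤ ∑ i ∈ range n, g i := sum_le_sum_of_subset (range_mono (by lia))
    have := ih (n - D) (by lia)
    have := Nat.mul_le_mul_left D hstep
    lia

lemma natCast_isBigO_sum_range {g : ℕ → ℕ} {D : ℕ}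
    (h : ∀ᶠ n in atTop, ∃ b ∈ Ico n (n + D), g b ≠ 0) :
    (fun n : ℕ ↦ (n : ℝ)) =O[atTop] fun n ↦ ((∑ i ∈ range n, g i : ℕ) : ℝ) := by
  obtain ⟨M, hM⟩ := eventually_atTop.1 h
  refine IsBigO.of_bound ((M + D + D : ℕ) : ℝ) ?_
  filter_upwards [eventually_gt_atTop (M + D)] with n hn
  have hle := le_add_mul_sum_range hM n
  have hpos : 1 ≤ ∑ i ∈ range n, g i := by
    by_contra! hzero
    rw [Nat.lt_one_iff.1 hzero] at hle
    lia
  rw [Real.norm_natCast, Real.norm_natCast]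
  norm_cast
  nlinarith

lemma isLittleO_sum_range_pow {E : Type*} [NormedAddCommGroup E] {f : ℕ → E} {s : ℕ}
    (h : f =o[atTop] fun n : ℕ ↦ (n : ℝ) ^ s) :
    (fun n ↦ ∑ i ∈ range n, f i) =o[atTop] fun n : ℕ ↦ (n : ℝ) ^ (s + 1) := by
  have hshift : f =o[atTop] fun n : ℕ ↦ (n + 1 : ℝ) ^ s :=
    h.trans_isBigO <| .of_norm_le fun n ↦ by
      rw [norm_pow, Real.norm_natCast]
      gcongr
      simp
  have hlower (n : ℕ) : (n : ℝ) ≤ ∑ i ∈ range n, (i + 1 : ℝ) ^ s := by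
    simpa using card_nsmul_le_sum (range n) (fun i : ℕ ↦ (i + 1 : ℝ) ^ s) 1
      fun i _ ↦ one_le_pow₀ (by simp)
  have hupper (n : ℕ) : ∑ i ∈ range n, (i + 1 : ℝ) ^ s ≤ (n : ℝ) ^ (s + 1) := by
    rw [pow_succ']
    simpa using sum_le_card_nsmul (range n) (fun i : ℕ ↦ (i + 1 : ℝ) ^ s) ((n : ℝ) ^ s)
      fun i hi ↦ pow_le_pow_left₀ (by positivity) (by exact_mod_cast mem_range.1 hi) s
  have htendsto : Tendsto (fun n ↦ ∑ i ∈ range n, (i + 1 : ℝ) ^ s) atTop atTop :=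
    tendsto_atTop_mono hlower tendsto_natCast_atTop_atTop
  refine (hshift.sum_range (fun n ↦ by positivity) htendsto).trans_isBigO (.of_norm_le fun n ↦ ?_)
  rw [Real.norm_of_nonneg (by positivity)]
  exact hupper n

lemma frequently_forall_mem_Ico_coeff_eq_zero {G : ℕ⟦X⟧} {s : ℕ}
    (h : (fun n ↦ ((coeff n (G ^ (s + 1)) : ℕ) : ℝ)) =o[atTop] fun n : ℕ ↦ (n : ℝ) ^ s)
    (D : ℕ) : ∃ᶠ n in atTop, ∀ b ∈ Ico n (n + D), coeff b G = 0 := by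
  by_contra hfreq
  have hdense : ∀ᶠ n in atTop, ∃ b ∈ Ico n (n + D), coeff b G ≠ 0 := by
    simpa only [not_frequently, not_forall, exists_prop] using hfreq
  have hlin : Tendsto (fun n : ℕ ↦ (s + 1) * n + 1) atTop atTop :=
    tendsto_atTop_mono (fun n ↦ by dsimp only [id]; nlinarith) tendsto_id
  have hscale : (fun n : ℕ ↦ (((s + 1) * n + 1 : ℕ) : ℝ) ^ (s + 1)) =O[atTop]
      fun n : ℕ ↦ (n : ℝ) ^ (s + 1) := by
    refine IsBigO.pow (IsBigO.of_bound (s + 2) ?_) _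
    filter_upwards [eventually_ge_atTop 1] with n hn
    rw [Real.norm_natCast, Real.norm_natCast]
    norm_cast
    lia
  have hself : (fun n : ℕ ↦ (n : ℝ) ^ (s + 1)) =o[atTop] fun n : ℕ ↦ (n : ℝ) ^ (s + 1) := calc
    _ =O[atTop] fun n ↦ ((∑ i ∈ range n, coeff i G : ℕ) : ℝ) ^ (s + 1) :=
      (natCast_isBigO_sum_range hdense).pow _
    _ =O[atTop] fun n ↦ ∑ i ∈ range ((s + 1) * n + 1), ((coeff i (G ^ (s + 1)) : ℕ) : ℝ) := by
      refine .of_norm_le fun n ↦ ?_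
      rw [norm_pow, Real.norm_natCast]
      exact_mod_cast (Nat.pow_le_pow_left (sum_le_sum_of_subset (range_mono n.le_succ)) _).trans
        (sum_coeff_pow_le G n (s + 1))
    _ =o[atTop] fun n ↦ (((s + 1) * n + 1 : ℕ) : ℝ) ^ (s + 1) :=
      (isLittleO_sum_range_pow h).comp_tendsto hlin
    _ =O[atTop] fun n ↦ (n : ℝ) ^ (s + 1) := hscale
  refine isLittleO_irrefl (Eventually.frequently ?_) hself
  filter_upwards [eventually_ne_atTop 0] with n hn
  positivity

theorem eventually_coeff_eq_zero_of_pow_isLittleO {G : ℕ⟦X⟧} {s : ℕ} {E P : S[X]}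
    (hE : E ≠ 0) (hP : (G.map (Nat.castRingHom S)) ^ (s + 1) * E = P)
    (hG : (fun n ↦ ((coeff n (G ^ (s + 1)) : ℕ) : ℝ)) =o[atTop] fun n : ℕ ↦ (n : ℝ) ^ s) :
    ∀ᶠ n in atTop, coeff n G = 0 := by
  obtain ⟨U, V, hU, hode⟩ := exists_ode_of_pow_mul_eq hE hP
  obtain ⟨D, hD⟩ := exists_eventually_coeff_eq_zero_of_gap hU hode
  simp only [PowerSeries.coeff_map, Nat.coe_castRingHom, Nat.cast_eq_zero] at hD
  obtain ⟨n, hgap, hstep⟩ :=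
    ((frequently_forall_mem_Ico_coeff_eq_zero hG D).and_eventually
      (eventually_forall_ge_atTop.2 hD)).exists
  exact eventually_atTop.2 ⟨n, forall_ge_eq_zero_of_gap hstep hgap⟩

lemma eventually_coeff_mul_one_sub_X_pow_eq_zero [CommRing R] {F : R⟦X⟧} {d e : ℕ}
    {q : ℕ → R[X]} (hq : Function.Periodic q d) (hdeg : ∀ n, (q n).degree < e)
    (hF : ∀ᶠ n : ℕ in atTop, coeff n F = (q n).eval (n : R)) :
    ∀ᶠ n in atTop, coeff n (F * (1 - PowerSeries.X ^ d) ^ e) = 0 := by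
  induction e generalizing F q with
  | zero =>
    filter_upwards [hF] with n hn
    have hqn : q n = 0 := by simpa [Nat.WithBot.lt_zero_iff] using hdeg n
    rw [pow_zero, mul_one, hn, hqn, Polynomial.eval_zero]
  | succ e ih =>
    rw [pow_succ', ← mul_assoc]
    refine ih (q := fun n ↦ q n - Polynomial.taylor (-(d : R)) (q n))
      (fun n ↦ by simp only [hq n]) (fun n ↦ ?_) ?_
    · rcases eq_or_ne (q n) 0 with h0 | h0
      · simp [h0]
      · have hlt := Polynomial.degree_sub_lt_left (Polynomial.degree_taylor (q n) (-(d : R))).symm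
          h0 (Polynomial.leadingCoeff_taylor (-(d : R)) (q n)).symm
        exact hlt.trans_le (Order.le_of_lt_succ (b := (e : WithBot ℕ)) (hdeg n))
    · filter_upwards [hF, (tendsto_sub_atTop_nat d).eventually hF, eventually_ge_atTop d]
        with n hn hnd hdn
      have hperiod : q (n - d) = q n := by rw [← hq (n - d), Nat.sub_add_cancel hdn]
      rw [mul_sub, mul_one, map_sub, PowerSeries.coeff_mul_X_pow', if_pos hdn, hn, hnd, hperiod,
        Polynomial.eval_sub, Polynomial.taylor_eval, Nat.cast_sub hdn, sub_eq_add_neg (n : R)]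

lemma isBigO_eval_of_periodic {q : ℕ → ℝ[X]} {d e : ℕ} (hd : 0 < d)
    (hq : Function.Periodic q d) (hdeg : ∀ n, (q n).degree ≤ e) :
    (fun n : ℕ ↦ (q n).eval (n : ℝ)) =O[atTop] fun n : ℕ ↦ (n : ℝ) ^ e := by
  have hresidue (i : ℕ) : (fun n : ℕ ↦ ‖(q i).eval (n : ℝ)‖) =O[atTop] fun n : ℕ ↦ (n : ℝ) ^ e := by
    have := Polynomial.isBigO_atTop_of_degree_le (P := q i) (Q := Polynomial.X ^ e)
      (by simpa using hdeg i)
    simpa [Function.comp_def] using (this.comp_tendsto tendsto_natCast_atTop_atTop).norm_left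
  refine .trans (.of_norm_le fun n ↦ ?_) (IsBigO.sum fun i (_ : i ∈ range d) ↦ hresidue i)
  rw [← hq.map_mod_nat n, Finset.sum_apply]
  exact single_le_sum (f := fun i ↦ ‖(q i).eval (n : ℝ)‖) (fun _ _ ↦ norm_nonneg _)
    (mem_range.2 (n.mod_lt hd))

/-- The generating function `∑ b ∈ B, X ^ b` of a set `B` of natural numbers. -/
noncomputable def indicatorSeries (B : Set ℕ) : ℕ⟦X⟧ :=
  PowerSeries.mk (B.indicator 1)

lemma coeff_prod_indicatorSeries {ι : Type*} [Fintype ι] (B : ι → Set ℕ) (n : ℕ) :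
    coeff n (∏ x, indicatorSeries (B x)) =
      Nat.card {b : ι → ℕ | (∀ x, b x ∈ B x) ∧ n = ∑ x, b x} := by
  classical
  have hcard : coeff n (∏ x, indicatorSeries (B x)) =
      #{l ∈ finsuppAntidiag univ n | ∀ x, l x ∈ B x} := by
    simp only [PowerSeries.coeff_prod, indicatorSeries, PowerSeries.coeff_mk, Set.indicator_apply,
      Pi.one_apply, prod_ite_zero, prod_const_one, mem_univ, true_imp_iff, card_filter]
  rw [hcard, ← Nat.subtype_card (p := fun l : ι →₀ ℕ ↦ (∀ x, l x ∈ B x) ∧ n = ∑ x, l x)]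
  · exact Nat.card_congr (Finsupp.equivFunOnFinite.subtypeEquiv fun l ↦ Iff.rfl)
  · intro l
    simp [and_comm, eq_comm]

variable {A : Set ℕ} {r : ℕ} {k m : Fin r → ℕ}

lemma coeff_prod_indicatorSeries_pow (A : Set ℕ) (m : Fin r → ℕ) (hk : ∀ i, 0 < k i)
    (n : ℕ) :
    coeff n (∏ i, indicatorSeries ((k i * ·) '' A) ^ m i) = reprFn A r k m n := by
  let scale (a : (i : Fin r) → Fin (m i) → ℕ) (x : Σ i, Fin (m i)) : ℕ := k x.1 * a x.1 x.2
  have hscale : Function.Injective scale := fun a a' h ↦ funext₂ fun i j ↦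
    Nat.eq_of_mul_eq_mul_left (hk i) (congrFun h ⟨i, j⟩)
  have hsum (a) : ∑ x, scale a x = ∑ i, k i * ∑ j, a i j := by
    simp only [scale, Fintype.sum_sigma, mul_sum]
  have himage : {b : (Σ i, Fin (m i)) → ℕ | (∀ x, b x ∈ (k x.1 * ·) '' A) ∧ n = ∑ x, b x} =
      scale '' {a | (∀ i j, a i j ∈ A) ∧ n = ∑ i, k i * ∑ j, a i j} := by
    ext b
    constructor
    · rintro ⟨hb, hn⟩
      choose a ha hab using hb
      obtain rfl : scale (Sigma.curry a) = b := funext hab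
      exact ⟨Sigma.curry a, ⟨fun i j ↦ ha ⟨i, j⟩, hn.trans (hsum (Sigma.curry a))⟩, rfl⟩
    · rintro ⟨a, ⟨ha, hn⟩, rfl⟩
      exact ⟨fun x ↦ ⟨_, ha x.1 x.2, rfl⟩, hn.trans (hsum a).symm⟩
  have hsigma : ∏ i, indicatorSeries ((k i * ·) '' A) ^ m i =
      ∏ x : Σ i, Fin (m i), indicatorSeries ((k x.1 * ·) '' A) := by
    simp only [Fintype.prod_sigma, prod_const, card_univ, Fintype.card_fin]
  rw [hsigma, coeff_prod_indicatorSeries, himage, Nat.card_image_of_injective hscale]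
  rfl

lemma exists_coeff_pow_gcd_eq_reprFn (A : Set ℕ) (m : Fin r → ℕ) (hk : ∀ i, 0 < k i) :
    ∃ G : ℕ⟦X⟧, ∀ n, coeff n (G ^ univ.gcd m) = reprFn A r k m n := by
  refine ⟨∏ i, indicatorSeries ((k i * ·) '' A) ^ (m i / univ.gcd m), fun n ↦ ?_⟩
  rw [← coeff_prod_indicatorSeries_pow A m hk, ← prod_pow]
  simp only [← pow_mul, Nat.div_mul_cancel (gcd_dvd (mem_univ _))]

lemma finite_setOf_eq_sum (m : Fin r → ℕ) (hk : ∀ i, 0 < k i) (n : ℕ) :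
    {a : (i : Fin r) → Fin (m i) → ℕ | n = ∑ i, k i * ∑ j, a i j}.Finite := by
  refine (Set.finite_Iic fun _ _ ↦ n).subset fun a ha i j ↦ ?_
  calc a i j ≤ ∑ j, a i j := single_le_sum (fun _ _ ↦ Nat.zero_le _) (mem_univ j)
    _ ≤ k i * ∑ j, a i j := Nat.le_mul_of_pos_left _ (hk i)
    _ ≤ ∑ i, k i * ∑ j, a i j :=
      single_le_sum (f := fun i ↦ k i * ∑ j, a i j) (fun _ _ ↦ Nat.zero_le _) (mem_univ i)
    _ = n := ha.symm

lemma reprFn_ne_zero (hk : ∀ i, 0 < k i) {a : (i : Fin r) → Fin (m i) → ℕ}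
    (ha : ∀ i j, a i j ∈ A) :
    reprFn A r k m (∑ i, k i * ∑ j, a i j) ≠ 0 := by
  have hfin := ((finite_setOf_eq_sum m hk (∑ i, k i * ∑ j, a i j)).subset
    fun b (hb : (∀ i j, b i j ∈ A) ∧ _) ↦ hb.2).to_subtype
  exact Nat.card_ne_zero.2 ⟨⟨a, ha, rfl⟩, hfin⟩

lemma frequently_reprFn_ne_zero (hA : A.Infinite) (hk : ∀ i, 0 < k i) (hm : ∃ i, m i ≠ 0) :
    ∃ᶠ n in atTop, reprFn A r k m n ≠ 0 := by
  obtain ⟨i, hi⟩ := hm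
  refine frequently_atTop.2 fun N ↦ ?_
  obtain ⟨a, ha, hNa⟩ := hA.exists_gt N
  refine ⟨_, ?_, reprFn_ne_zero hk (a := fun _ _ ↦ a) fun _ _ ↦ ha⟩
  calc N ≤ a := hNa.le
    _ ≤ k i * (m i * a) :=
      (Nat.le_mul_of_pos_left a (Nat.pos_of_ne_zero hi)).trans (Nat.le_mul_of_pos_left _ (hk i))
    _ = k i * ∑ _ : Fin (m i), a := by simp
    _ ≤ ∑ i, k i * ∑ _ : Fin (m i), a :=
      single_le_sum (f := fun i ↦ k i * ∑ _ : Fin (m i), a) (fun _ _ ↦ Nat.zero_le _) (mem_univ i)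

theorem not_reprFn_isLittleO (hA : A.Infinite) (hk : ∀ i, 0 < k i) {s : ℕ}
    (hs : univ.gcd m = s + 1) {E P : S[X]} (hE : E ≠ 0)
    (hP : PowerSeries.mk (fun n ↦ (reprFn A r k m n : S)) * E = P) :
    ¬ (fun n ↦ (reprFn A r k m n : ℝ)) =o[atTop] fun n : ℕ ↦ (n : ℝ) ^ s := by
  intro hlittle
  obtain ⟨G, hG⟩ := exists_coeff_pow_gcd_eq_reprFn A m hk
  rw [hs] at hG
  have hmap : G.map (Nat.castRingHom S) ^ (s + 1) =
      PowerSeries.mk fun n ↦ (reprFn A r k m n : S) := by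
    ext n
    rw [← map_pow, PowerSeries.coeff_map, hG, PowerSeries.coeff_mk, Nat.coe_castRingHom]
  have hGpoly : ∀ᶠ n in atTop, coeff n G = 0 :=
    eventually_coeff_eq_zero_of_pow_isLittleO hE (hmap ▸ hP) (by simpa only [hG] using hlittle)
  obtain ⟨Q, rfl⟩ := eventually_coeff_eq_zero_iff.1 hGpoly
  have hzero : ∀ᶠ n in atTop, reprFn A r k m n = 0 := by
    simpa only [hG] using eventually_coeff_eq_zero_iff.2 ⟨Q ^ (s + 1), Polynomial.coe_pow _⟩
  have hm : ∃ i, m i ≠ 0 := by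
    by_contra! hm
    exact s.succ_ne_zero (hs.symm.trans (gcd_eq_zero_iff.2 fun i _ ↦ hm i))
  exact frequently_reprFn_ne_zero hA hk hm (hzero.mono fun n hn ↦ not_not.2 hn)

/-- Quasi-polynomials are encoded as `n ↦ (q n).eval n` with `q` periodic. -/
theorem stmt0_general (hA : A.Infinite) (hk : ∀ i, 0 < k i) (hm : 2 ≤ univ.gcd m)
    {d : ℕ} (hd : 0 < d) {q : ℕ → ℚ[X]} (hq : Function.Periodic q d)
    (hdeg : ∀ n, (q n).degree ≤ (univ.gcd m - 2 : ℕ)) :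
    ¬ ∀ᶠ n : ℕ in atTop, (reprFn A r k m n : ℚ) = (q n).eval (n : ℚ) := by
  intro h
  obtain ⟨t, ht⟩ := Nat.exists_eq_add_of_le' hm
  simp only [ht, Nat.add_sub_cancel] at hdeg
  have hE : (1 - Polynomial.X ^ d : ℚ[X]) ^ (t + 1) ≠ 0 :=
    pow_ne_zero _ (sub_ne_zero.2 (sub_ne_zero.1 (Polynomial.X_pow_sub_C_ne_zero hd 1)).symm)
  obtain ⟨P, hP⟩ := eventually_coeff_eq_zero_iff.1 <|
    eventually_coeff_mul_one_sub_X_pow_eq_zero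
      (F := PowerSeries.mk fun n ↦ (reprFn A r k m n : ℚ)) hq
      (fun n ↦ (hdeg n).trans_lt (by exact_mod_cast t.lt_succ_self))
      (by simpa only [PowerSeries.coeff_mk] using h)
  refine not_reprFn_isLittleO hA hk ht hE (P := P) (by push_cast; exact hP.symm) ?_
  have hgrowth := isBigO_eval_of_periodic hd (hq.comp (Polynomial.map (algebraMap ℚ ℝ)))
    fun n ↦ (Polynomial.degree_map (q n) _).trans_le (hdeg n)
  have hpow := (isLittleO_pow_pow_atTop_of_lt (𝕜 := ℝ) t.lt_succ_self).comp_tendsto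
    tendsto_natCast_atTop_atTop
  refine (hgrowth.trans_isLittleO hpow).congr' ?_ .rfl
  filter_upwards [h] with n hn
  simp only [Function.comp_apply, Polynomial.eval_natCast_map, ← hn, map_natCast]

end

theorem stmt0 (A : Set ℕ) (hA : A.Infinite) (hApos : ∀ a ∈ A, 0 < a)
    (r : ℕ) (hr : 1 ≤ r) (k m : Fin r → ℕ)
    (hk : ∀ i, 0 < k i) (hkmono : StrictMono k) (hm : ∀ i, 0 < m i)
    (s : ℕ) (hs : s = Finset.univ.gcd m) (hs2 : 2 ≤ s)
    (q : Polynomial ℚ) (hq : q.degree ≤ (s - 2 : ℕ)) :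
    ¬ ∀ᶠ n in Filter.atTop, (reprFn A r k m n : ℚ) = q.eval (n : ℚ) := by
  subst hs
  exact stmt0_general hA hk hs2 one_pos (q := fun _ ↦ q) (fun _ ↦ rfl) fun _ ↦ hq
end

section
/- Let A be an infinite set of positive integers, let m = {(k_1,m_1),...,(k_r,m_r)} be a configuration whose degree s = gcd(m_1,...,m_r) satisfies s ≥ 2, let c > 0 be a real constant and let ε > 0. Then there is no constant K such that |Σ_{j=1}^{n} (r_m(j,A) − c)| ≤ K·n^{1/4−ε} for all n ≥ 1; that is, Σ_{j=1}^{n}(r_m(j,A) − c) = O(n^{1/4−ε}) cannot hold. -/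
/-!
Put `F = ∏ i, f_{k i} ^ (m i / s)`, where `f_k` is the generating series of the dilate `k • A`;
then `F ^ s` generates the representation function. If the summatory error had order `n ^ α` with
`α < 1 / 4`, then `F ^ s = c / (1 - z) + (1 - z) E`, where the coefficients of `E` are `O(n ^ α)`.

Let `G = 1 + z + ⋯ + z ^ (M - 1)` and `x = ρ ^ 2 = 1 - 1 / N`. The coefficients of `G F` are
integers, so `|a| ≤ a ^ 2` and Parseval's identity bound `|G F (x)|` by the average of `|G F| ^ 2`
over the circle of radius `ρ`, while `G(x)` is itself the average of `|G| ^ 2`. By convexity these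
second powers of `|F|` may be replaced by `s`-th powers, so that the average of `|G ^ 2 F ^ s|` is
at least `√|F ^ s (x)| G(x)`, which has order `√N M`.

From above, `|G| ≤ M`, and `|(1 - z) G| ≤ 2` cancels one factor of the error term. As
`1 / (1 - z)` is the square of a series with coefficients `O(n ^ (-1/2))`, Parseval's identity
bounds the average of `1 / |1 - z|` by `O(log N)`, so the average of `|G ^ 2 F ^ s|` is at most
about `M ^ 2 log N + N ^ (2 α + 1 / 2)`. The choice `M ≈ N ^ (1 / 4 + α)` gives a contradiction.
-/

open Filter Finset Metric PowerSeries Real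

theorem hasSum_norm_sq_of_orthonormal {𝕜 E ι : Type*} [RCLike 𝕜] [NormedAddCommGroup E]
    [InnerProductSpace 𝕜 E] {v : ι → E} (hv : Orthonormal 𝕜 v) {b : ι → 𝕜} {w : E}
    (hw : HasSum (fun i => b i • v i) w) : HasSum (fun i => ‖b i‖ ^ 2) (‖w‖ ^ 2) := by
  have partial_sums (t : Finset ι) : ‖∑ i ∈ t, b i • v i‖ ^ 2 = ∑ i ∈ t, ‖b i‖ ^ 2 := by
    rw [← RCLike.ofReal_inj (K := 𝕜), RCLike.ofReal_pow, ← inner_self_eq_norm_sq_to_K,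
      hv.inner_sum]
    simp only [RCLike.conj_mul, RCLike.ofReal_sum, RCLike.ofReal_pow]
  exact (hw.norm.pow 2).congr partial_sums

open MeasureTheory in
theorem norm_sq_toLp {α 𝕜 : Type*} [TopologicalSpace α] [CompactSpace α] [MeasurableSpace α]
    [BorelSpace α] [RCLike 𝕜] (μ : Measure α) [IsFiniteMeasure μ] (g : C(α, 𝕜)) :
    ‖ContinuousMap.toLp (E := 𝕜) 2 μ 𝕜 g‖ ^ 2 = ∫ x, ‖g x‖ ^ 2 ∂μ := by
  rw [← RCLike.ofReal_inj (K := 𝕜), RCLike.ofReal_pow, ← inner_self_eq_norm_sq_to_K (𝕜 := 𝕜),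
    ContinuousMap.inner_toLp, ← integral_ofReal]
  simp only [RCLike.mul_conj, RCLike.ofReal_pow]

/-! ### Power series on the unit disc -/

/-- The power series over `ℂ` that converge absolutely on the open unit disc. -/
def discSeries : Subring ℂ⟦X⟧ where
  carrier := {p | ∀ z : ℂ, ‖z‖ < 1 → Summable fun n => ‖coeff n p * z ^ n‖}
  zero_mem' z _ := by simp
  one_mem' z _ := summable_of_ne_finset_zero (s := {0}) fun n hn => by
    simp [coeff_one, show n ≠ 0 by simpa using hn]
  add_mem' {p q} hp hq z hz := .of_nonneg_of_le (fun _ => norm_nonneg _)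
    (fun n => by simpa [add_mul] using norm_add_le (coeff n p * z ^ n) (coeff n q * z ^ n))
    ((hp z hz).add (hq z hz))
  neg_mem' {p} hp z hz := by simpa using hp z hz
  mul_mem' {p q} hp hq z hz := by
    refine (summable_norm_sum_mul_antidiagonal_of_summable_norm (hp z hz) (hq z hz)).congr
      fun n => ?_
    rw [coeff_mul, sum_mul]
    congr 1
    refine sum_congr rfl fun ij hij => ?_
    rw [← mem_antidiagonal.mp hij, pow_add]
    ring

/-- The value at `z` of the power series `p`, a junk value unless the series converges at `z`. -/
noncomputable def sumAt (p : ℂ⟦X⟧) (z : ℂ) : ℂ := ∑' n, coeff n p * z ^ n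

variable {p q : ℂ⟦X⟧} {z : ℂ} {ρ : ℝ}

theorem hasSum_sumAt (hp : p ∈ discSeries) (hz : ‖z‖ < 1) :
    HasSum (fun n => coeff n p * z ^ n) (sumAt p z) :=
  (hp z hz).of_norm.hasSum

theorem mem_discSeries_of_norm_coeff_le {B : ℝ} (hp : ∀ n, ‖coeff n p‖ ≤ B) : p ∈ discSeries := by
  intro z hz
  refine .of_nonneg_of_le (fun _ => norm_nonneg _) (fun n => ?_)
    ((summable_geometric_of_lt_one (norm_nonneg z) hz).mul_left B)
  rw [norm_mul, norm_pow]
  gcongr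
  exact hp n

theorem coe_polynomial_mem_discSeries (p : Polynomial ℂ) : (p : ℂ⟦X⟧) ∈ discSeries :=
  fun z _ => summable_of_ne_finset_zero (s := p.support) fun n hn => by
    simp [Polynomial.notMem_support_iff.mp hn]

theorem sumAt_coe_polynomial (p : Polynomial ℂ) (z : ℂ) : sumAt p z = p.eval z := by
  rw [sumAt, Polynomial.eval_eq_sum, Polynomial.sum_def]
  simp only [Polynomial.coeff_coe]
  exact tsum_eq_sum fun n hn => by simp [Polynomial.notMem_support_iff.mp hn]

theorem sumAt_mul (hp : p ∈ discSeries) (hq : q ∈ discSeries) (hz : ‖z‖ < 1) :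
    sumAt (p * q) z = sumAt p z * sumAt q z := by
  rw [sumAt, sumAt, sumAt,
    tsum_mul_tsum_eq_tsum_sum_antidiagonal_of_summable_norm (hp z hz) (hq z hz)]
  refine tsum_congr fun n => ?_
  rw [coeff_mul, sum_mul]
  refine sum_congr rfl fun ij hij => ?_
  rw [← mem_antidiagonal.mp hij, pow_add]
  ring

theorem sumAt_sub (hp : p ∈ discSeries) (hq : q ∈ discSeries) (hz : ‖z‖ < 1) :
    sumAt (p - q) z = sumAt p z - sumAt q z :=
  ((hasSum_sumAt hp hz).sub (hasSum_sumAt hq hz)).tsum_eq ▸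
    tsum_congr fun n => by rw [map_sub, sub_mul]

theorem sumAt_one (z : ℂ) : sumAt 1 z = 1 := by
  simpa using sumAt_coe_polynomial 1 z

theorem X_mem_discSeries : (X : ℂ⟦X⟧) ∈ discSeries :=
  Polynomial.coe_X (R := ℂ) ▸ coe_polynomial_mem_discSeries Polynomial.X

theorem sumAt_one_sub_X (hz : ‖z‖ < 1) : sumAt (1 - X) z = 1 - z := by
  rw [sumAt_sub (one_mem _) X_mem_discSeries hz, sumAt_one, ← Polynomial.coe_X,
    sumAt_coe_polynomial, Polynomial.eval_X]

theorem sumAt_pow (hp : p ∈ discSeries) (hz : ‖z‖ < 1) (k : ℕ) :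
    sumAt (p ^ k) z = sumAt p z ^ k := by
  induction k with
  | zero => rw [pow_zero, pow_zero, sumAt_one]
  | succ k ih => rw [pow_succ, sumAt_mul (pow_mem hp k) hp hz, ih, pow_succ]

theorem continuousOn_sumAt (hp : p ∈ discSeries) (hρ : ρ < 1) :
    ContinuousOn (sumAt p) (closedBall 0 ρ) := by
  obtain hneg | hpos := lt_or_ge ρ 0
  · simp [closedBall_eq_empty.mpr hneg]
  refine continuousOn_tsum (fun n => by fun_prop) (hp ρ ?_) fun n z hz => ?_
  · rwa [Complex.norm_of_nonneg hpos]
  · rw [norm_mul, norm_mul, norm_pow, norm_pow, Complex.norm_of_nonneg hpos]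
    gcongr
    exact mem_closedBall_zero_iff.mp hz

theorem norm_lt_one_of_mem_sphere (h0 : 0 ≤ ρ) (h1 : ρ < 1) (hz : z ∈ sphere (0 : ℂ) |ρ|) :
    ‖z‖ < 1 := by
  rwa [mem_sphere_zero_iff_norm.mp hz, abs_of_nonneg h0]

theorem hasSum_circleAverage_norm_sq_sumAt (hp : p ∈ discSeries) (h0 : 0 ≤ ρ) (h1 : ρ < 1) :
    HasSum (fun n => ‖coeff n p‖ ^ 2 * (ρ ^ 2) ^ n)
      (circleAverage (fun z => ‖sumAt p z‖ ^ 2) 0 ρ) := by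
  have : Fact (0 < 2 * π) := ⟨two_pi_pos⟩
  have hnorm : ‖(ρ : ℂ)‖ < 1 := by rwa [Complex.norm_of_nonneg h0]
  let b (n : ℕ) : ℂ := coeff n p * (ρ : ℂ) ^ n
  obtain ⟨g, hg⟩ : Summable fun n : ℕ => b n • fourier (T := 2 * π) n :=
    .of_norm (by simpa [norm_smul, b, fourier_norm] using hp ρ hnorm)
  have g_coe (θ : ℝ) : g (θ : AddCircle (2 * π)) = sumAt p (circleMap 0 ρ θ) := by
    refine (ContinuousMap.hasSum_apply hg θ).unique ?_
    convert hasSum_sumAt hp (z := circleMap 0 ρ θ) ?_ using 2 with n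
    · simp [b, circleMap, mul_pow, mul_assoc, ← Complex.exp_nat_mul, AddCircle.toCircle_nsmul,
        AddCircle.toCircle_apply_mk]
    · simpa [abs_of_nonneg h0] using h1
  have norm_g : ‖ContinuousMap.toLp (E := ℂ) 2 AddCircle.haarAddCircle ℂ g‖ ^ 2 =
      circleAverage (fun z => ‖sumAt p z‖ ^ 2) 0 ρ := by
    rw [norm_sq_toLp, AddCircle.integral_haarAddCircle, circleAverage,
      ← AddCircle.intervalIntegral_preimage (2 * π) 0]
    simp only [g_coe, zero_add]
  have parseval := hasSum_norm_sq_of_orthonormal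
    (orthonormal_fourier.comp _ Nat.cast_injective)
    (hg.mapL (ContinuousMap.toLp (E := ℂ) 2 AddCircle.haarAddCircle ℂ))
  rw [norm_g] at parseval
  refine parseval.congr_fun fun n => ?_
  rw [norm_mul, norm_pow, Complex.norm_of_nonneg h0, mul_pow, pow_right_comm]

/-! ### The kernel `1 / (1 - z)` -/

theorem choose_succ_mul (a : ℂ) (n : ℕ) :
    Ring.choose a (n + 1) * (n + 1) = Ring.choose a n * (a - n) := by
  have h : ((n + 1 : ℕ) : ℂ) ≠ 0 := Nat.cast_ne_zero.mpr n.succ_ne_zero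
  rw [Ring.choose_eq_smul, Ring.choose_eq_smul, descPochhammer_succ_right, Polynomial.smeval_mul,
    Polynomial.smeval_sub, Polynomial.smeval_X, Polynomial.smeval_natCast, Nat.factorial_succ]
  push_cast at h ⊢
  simp only [smul_eq_mul, nsmul_eq_mul, pow_one, pow_zero, mul_one]
  field_simp

/-- The expansion of `(1 - X) ^ (-1/2)`: its values are square roots of the kernel `1 / (1 - z)`,
whose absolute value Parseval's identity can therefore average. -/
noncomputable def invSqrtSeries : ℂ⟦X⟧ := rescale (-1) (binomialSeries ℂ (-1 / 2 : ℂ))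

theorem invSqrtSeries_mul_self_mul : invSqrtSeries * invSqrtSeries * (1 - X) = 1 := by
  have rescaled : (1 - X : ℂ⟦X⟧) = rescale (-1) (binomialSeries ℂ (1 : ℂ)) := by
    have := binomialSeries_nat (R := ℂ) (A := ℂ) 1
    rw [Nat.cast_one, pow_one] at this
    simp [this, rescale_X, sub_eq_add_neg]
  rw [rescaled, invSqrtSeries, ← map_mul, ← map_mul, ← binomialSeries_add, ← binomialSeries_add,
    show (-1 / 2 + -1 / 2 + 1 : ℂ) = 0 by norm_num, binomialSeries_zero, map_one]

theorem norm_coeff_invSqrtSeries_sq_le (n : ℕ) :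
    ‖coeff n invSqrtSeries‖ ^ 2 ≤ 1 / (n + 1) := by
  have norm_coeff (n : ℕ) : ‖coeff n invSqrtSeries‖ = ‖Ring.choose (-1 / 2 : ℂ) n‖ := by
    simp [invSqrtSeries, coeff_rescale]
  have recurrence (n : ℕ) : ‖coeff (n + 1) invSqrtSeries‖ * (n + 1) =
      ‖coeff n invSqrtSeries‖ * (n + 1 / 2) := by
    rw [norm_coeff, norm_coeff]
    convert congrArg norm (choose_succ_mul (-1 / 2) n) using 1
    · rw [norm_mul, ← Nat.cast_succ, ← Nat.cast_succ, Complex.norm_natCast]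
    · rw [norm_mul, ← norm_neg (_ - _),
        show -(-1 / 2 - (n : ℂ)) = ((n + 1 / 2 : ℝ) : ℂ) by push_cast; ring,
        Complex.norm_of_nonneg (by positivity)]
  induction n with
  | zero => simp [norm_coeff, -coeff_zero_eq_constantCoeff]
  | succ n ih =>
    rw [eq_div_of_mul_eq (by positivity) (recurrence n), mul_div_assoc, mul_pow]
    calc ‖coeff n invSqrtSeries‖ ^ 2 * ((n + 1 / 2 : ℝ) / (n + 1)) ^ 2
        ≤ 1 / (n + 1) * ((n + 1 / 2 : ℝ) / (n + 1)) ^ 2 := by gcongr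
      _ ≤ 1 / (((n + 1 : ℕ) : ℝ) + 1) := by
          rw [div_pow, div_mul_div_comm, div_le_div_iff₀ (by positivity) (by positivity)]
          push_cast
          nlinarith [sq_nonneg (n : ℝ), (n.cast_nonneg : (0 : ℝ) ≤ n)]

theorem circleAverage_norm_one_sub_inv_le (h0 : 0 < ρ) (h1 : ρ < 1) :
    circleAverage (fun z => ‖1 - z‖⁻¹) 0 ρ ≤ (ρ ^ 2)⁻¹ * -log (1 - ρ ^ 2) := by
  have mem : invSqrtSeries ∈ discSeries := mem_discSeries_of_norm_coeff_le (B := 1) fun n => by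
    rw [← sq_le_one_iff₀ (norm_nonneg _)]
    exact (norm_coeff_invSqrtSeries_sq_le n).trans
      (div_le_one_of_le₀ (by linarith [(n.cast_nonneg : (0 : ℝ) ≤ n)]) (by positivity))
  have norm_sq (z : ℂ) (hz : ‖z‖ < 1) : ‖sumAt invSqrtSeries z‖ ^ 2 = ‖1 - z‖⁻¹ := by
    have := congrArg (sumAt · z) invSqrtSeries_mul_self_mul
    rw [sumAt_mul (mul_mem mem mem) (sub_mem (one_mem _) X_mem_discSeries) hz, sumAt_mul mem mem hz,
      sumAt_one_sub_X hz, sumAt_one, ← sq] at this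
    rw [← norm_pow, ← norm_inv, eq_inv_of_mul_eq_one_left this]
  have hρ : |ρ ^ 2| < 1 := by
    rw [abs_of_nonneg (sq_nonneg ρ)]
    exact pow_lt_one₀ h0.le h1 two_ne_zero
  rw [← circleAverage_congr_sphere fun z hz =>
    norm_sq z (norm_lt_one_of_mem_sphere h0.le h1 hz)]
  refine hasSum_le (fun n => ?_) (hasSum_circleAverage_norm_sq_sumAt mem h0.le h1)
    ((hasSum_pow_div_log_of_abs_lt_one hρ).mul_left (ρ ^ 2)⁻¹)
  calc ‖coeff n invSqrtSeries‖ ^ 2 * (ρ ^ 2) ^ n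
      ≤ 1 / (n + 1) * (ρ ^ 2) ^ n := by gcongr; exact norm_coeff_invSqrtSeries_sq_le n
    _ = (ρ ^ 2)⁻¹ * ((ρ ^ 2) ^ (n + 1) / (n + 1)) := by field_simp; ring

/-! ### Averages over circles and powers -/

theorem circleIntegrable_of_continuousOn_closedBall {f : ℂ → ℝ} (h0 : 0 ≤ ρ)
    (hf : ContinuousOn f (closedBall 0 ρ)) : CircleIntegrable f 0 ρ :=
  (hf.mono sphere_subset_closedBall).circleIntegrable h0

theorem norm_ofReal_sq_lt_one (h0 : 0 ≤ ρ) (h1 : ρ < 1) : ‖((ρ ^ 2 : ℝ) : ℂ)‖ < 1 := by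
  rw [Complex.norm_of_nonneg (sq_nonneg ρ)]
  exact pow_lt_one₀ h0 h1 two_ne_zero

theorem norm_sumAt_le_circleAverage_norm_sq (hp : p ∈ discSeries)
    (hint : p ∈ (PowerSeries.map (Int.castRingHom ℂ)).range) (h0 : 0 ≤ ρ) (h1 : ρ < 1) :
    ‖sumAt p (ρ ^ 2 : ℝ)‖ ≤ circleAverage (fun z => ‖sumAt p z‖ ^ 2) 0 ρ := by
  obtain ⟨P, rfl⟩ := hint
  refine (hasSum_sumAt hp (norm_ofReal_sq_lt_one h0 h1)).norm_le_of_bounded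
    (hasSum_circleAverage_norm_sq_sumAt hp h0 h1) fun n => ?_
  have abs_le_sq : |coeff n P| ≤ coeff n P ^ 2 := by
    simpa using Int.le_self_sq |coeff n P|
  rw [norm_mul, norm_pow, Complex.norm_of_nonneg (sq_nonneg ρ), coeff_map, eq_intCast,
    Complex.norm_intCast, sq_abs]
  gcongr
  exact_mod_cast abs_le_sq

-- The tangent-line inequality for the convex function `t ↦ t ^ ((k + 2) / 2)` at `t = l ^ 2`.
theorem mul_pow_mul_sq_le {l y : ℝ} (hl : 0 ≤ l) (hy : 0 ≤ y) (k : ℕ) :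
    (k + 2) * (l ^ k * y ^ 2) ≤ 2 * y ^ (k + 2) + k * l ^ (k + 2) := by
  induction k with
  | zero => simp
  | succ k ih =>
    have same_sign : 0 ≤ (y - l) * (2 * y ^ (k + 2) - l ^ (k + 1) * (y + l)) := by
      obtain hly | hyl := le_total l y
      · have : l ^ (k + 1) * (y + l) ≤ y ^ (k + 1) * (y + y) := by gcongr
        exact mul_nonneg (sub_nonneg.mpr hly) (by rw [pow_succ y (k + 1)]; linarith)
      · have : y ^ (k + 1) * (y + y) ≤ l ^ (k + 1) * (y + l) := by gcongr
        exact mul_nonneg_of_nonpos_of_nonpos (sub_nonpos.mpr hyl)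
          (by rw [pow_succ y (k + 1)]; linarith)
    push_cast
    linear_combination same_sign + l * ih

theorem circleAverage_const_mul (b : ℝ) (f : ℂ → ℝ) (w : ℂ) (ρ : ℝ) :
    circleAverage (fun z => b * f z) w ρ = b * circleAverage f w ρ :=
  circleAverage_fun_smul (a := b) (f := f)

theorem pow_mul_circleAverage_le {g f : ℂ → ℝ} {l : ℝ} {s : ℕ} (h0 : 0 ≤ ρ)
    (hg : ContinuousOn g (closedBall 0 ρ)) (hf : ContinuousOn f (closedBall 0 ρ))
    (hg0 : ∀ z, 0 ≤ g z) (hf0 : ∀ z, 0 ≤ f z) (hl : 0 ≤ l) (hs : 2 ≤ s)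
    (h : l ^ 2 * circleAverage g 0 ρ ≤ circleAverage (fun z => g z * f z ^ 2) 0 ρ) :
    l ^ s * circleAverage g 0 ρ ≤ circleAverage (fun z => g z * f z ^ s) 0 ρ := by
  obtain ⟨k, rfl⟩ := Nat.exists_eq_add_of_le' hs
  have integrable (b : ℝ) (j : ℕ) : CircleIntegrable (fun z => b * (g z * f z ^ j)) 0 ρ :=
    circleIntegrable_of_continuousOn_closedBall h0 (by fun_prop)
  have integrable_weight (b : ℝ) : CircleIntegrable (fun z => b * g z) 0 ρ :=
    circleIntegrable_of_continuousOn_closedBall h0 (by fun_prop)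
  have average : (k + 2) * l ^ k * circleAverage (fun z => g z * f z ^ 2) 0 ρ ≤
      2 * circleAverage (fun z => g z * f z ^ (k + 2)) 0 ρ +
        k * l ^ (k + 2) * circleAverage g 0 ρ := by
    rw [← circleAverage_const_mul, ← circleAverage_const_mul, ← circleAverage_const_mul,
      ← circleAverage_fun_add (integrable _ _) (integrable_weight _)]
    refine circleAverage_mono (integrable _ _)
      ((integrable _ _).add (integrable_weight _)) fun z _ => ?_
    have := mul_le_mul_of_nonneg_left (mul_pow_mul_sq_le hl (hf0 z) k) (hg0 z)
    linarith
  have scaled := mul_le_mul_of_nonneg_left h (show 0 ≤ (k + 2) * l ^ k by positivity)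
  rw [← mul_assoc, mul_assoc _ (l ^ k), ← pow_add] at scaled
  linarith

/-- The truncated geometric series `1 + X + ⋯ + X ^ (M - 1)`. -/
noncomputable def geomSeries (M : ℕ) : ℂ⟦X⟧ := ∑ i ∈ range M, X ^ i

variable {M : ℕ}

theorem geomSeries_mem_discSeries (M : ℕ) : geomSeries M ∈ discSeries :=
  sum_mem fun i _ => pow_mem X_mem_discSeries i

theorem geomSeries_mem_range (M : ℕ) :
    geomSeries M ∈ (PowerSeries.map (Int.castRingHom ℂ)).range :=
  sum_mem fun i _ => pow_mem (RingHom.mem_range.mpr ⟨X, map_X _⟩) i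

theorem sumAt_geomSeries (M : ℕ) (z : ℂ) : sumAt (geomSeries M) z = ∑ i ∈ range M, z ^ i := by
  have : geomSeries M = ((∑ i ∈ range M, Polynomial.X ^ i : Polynomial ℂ) : ℂ⟦X⟧) := by
    simp only [geomSeries, ← Polynomial.coeToPowerSeries.ringHom_apply, map_sum, map_pow]
    simp
  rw [this, sumAt_coe_polynomial, Polynomial.eval_geom_sum]

theorem norm_sumAt_geomSeries_le (hz : ‖z‖ ≤ 1) : ‖sumAt (geomSeries M) z‖ ≤ M := by
  rw [sumAt_geomSeries]
  refine (norm_sum_le _ _).trans ?_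
  calc ∑ i ∈ range M, ‖z ^ i‖ ≤ ∑ i ∈ range M, 1 := by
        gcongr; rw [norm_pow]; exact pow_le_one₀ (norm_nonneg z) hz
    _ = M := by simp

theorem norm_sumAt_geomSeries_mul_norm_one_sub_le (hz : ‖z‖ ≤ 1) :
    ‖sumAt (geomSeries M) z‖ * ‖1 - z‖ ≤ 2 := by
  rw [sumAt_geomSeries, ← norm_mul, geom_sum_mul_neg]
  calc ‖1 - z ^ M‖ ≤ ‖(1 : ℂ)‖ + ‖z‖ ^ M := norm_pow z M ▸ norm_sub_le _ _
    _ ≤ 2 := by rw [norm_one]; linarith [pow_le_one₀ (n := M) (norm_nonneg z) hz]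

theorem circleAverage_norm_sq_sumAt_geomSeries (h0 : 0 ≤ ρ) (h1 : ρ < 1) :
    circleAverage (fun z => ‖sumAt (geomSeries M) z‖ ^ 2) 0 ρ = ∑ i ∈ range M, (ρ ^ 2) ^ i := by
  have coeff_eq (n : ℕ) : coeff n (geomSeries M) = if n ∈ range M then 1 else 0 := by
    simp [geomSeries, coeff_X_pow]
  have := hasSum_circleAverage_norm_sq_sumAt (geomSeries_mem_discSeries M) h0 h1
  rw [← this.tsum_eq, tsum_eq_sum (s := range M) fun n hn => by simp [coeff_eq, hn]]
  exact sum_congr rfl fun n hn => by simp [coeff_eq, mem_range.mp hn]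

/-! ### The summatory error -/

/-- The generating series of the summatory errors `∑ j ≤ n, (coeff j R - c)`. -/
noncomputable def errorSeries (R : ℂ⟦X⟧) (c : ℂ) : ℂ⟦X⟧ :=
  (R - PowerSeries.mk fun _ => c) * PowerSeries.mk 1

theorem coeff_errorSeries (R : ℂ⟦X⟧) (c : ℂ) (n : ℕ) :
    coeff n (errorSeries R c) = ∑ j ∈ range (n + 1), (coeff j R - c) := by
  rw [errorSeries, coeff_mul, Nat.sum_antidiagonal_eq_sum_range_succ_mk]
  simp

variable {R : ℂ⟦X⟧} {c : ℂ} {N : ℝ}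

theorem mk_const_mem_discSeries (c : ℂ) : (PowerSeries.mk fun _ => c) ∈ discSeries :=
  mem_discSeries_of_norm_coeff_le (B := ‖c‖) fun n => by rw [coeff_mk]

theorem errorSeries_mem_discSeries (hR : R ∈ discSeries) (c : ℂ) :
    errorSeries R c ∈ discSeries :=
  mul_mem (sub_mem hR (mk_const_mem_discSeries c)) (mk_const_mem_discSeries 1)

theorem sumAt_mk_const (c : ℂ) (hz : ‖z‖ < 1) :
    sumAt (PowerSeries.mk fun _ => c) z = c * (1 - z)⁻¹ := by
  simp only [sumAt, coeff_mk, tsum_mul_left, tsum_geometric_of_norm_lt_one hz]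

theorem sumAt_eq_add_mul_errorSeries (hR : R ∈ discSeries) (c : ℂ) (hz : ‖z‖ < 1) :
    sumAt R z = c * (1 - z)⁻¹ + (1 - z) * sumAt (errorSeries R c) z := by
  have : errorSeries R c * (1 - X) = R - PowerSeries.mk fun _ => c := by
    rw [errorSeries, mul_assoc, mk_one_mul_one_sub_eq_one, mul_one]
  have := congrArg (sumAt · z) this
  rw [sumAt_mul (errorSeries_mem_discSeries hR c) (sub_mem (one_mem _) X_mem_discSeries) hz,
    sumAt_one_sub_X hz, sumAt_sub hR (mk_const_mem_discSeries c) hz, sumAt_mk_const c hz] at this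
  linear_combination -this

theorem norm_sq_sumAt_geomSeries_mul_le (hR : R ∈ discSeries) (c : ℂ) (M : ℕ) {τ : ℝ} (hτ : 0 < τ)
    (hz : ‖z‖ < 1) : ‖sumAt (geomSeries M) z‖ ^ 2 * ‖sumAt R z‖ ≤
      ‖c‖ * M ^ 2 * ‖1 - z‖⁻¹ + τ * ‖sumAt (geomSeries M) z‖ ^ 2 +
        τ⁻¹ * ‖sumAt (errorSeries R c) z‖ ^ 2 := by
  set G := ‖sumAt (geomSeries M) z‖
  set E := ‖sumAt (errorSeries R c) z‖
  have triangle : ‖sumAt R z‖ ≤ ‖c‖ * ‖1 - z‖⁻¹ + ‖1 - z‖ * E := by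
    rw [sumAt_eq_add_mul_errorSeries hR c hz, ← norm_inv, ← norm_mul, ← norm_mul]
    exact norm_add_le _ _
  have two_mul_le : 2 * G * E ≤ τ * G ^ 2 + τ⁻¹ * E ^ 2 := by
    have := mul_nonneg (inv_nonneg.mpr hτ.le) (sq_nonneg (τ * G - E))
    field_simp at this ⊢
    linarith
  calc G ^ 2 * ‖sumAt R z‖
      ≤ G ^ 2 * (‖c‖ * ‖1 - z‖⁻¹ + ‖1 - z‖ * E) := by gcongr
    _ = ‖c‖ * G ^ 2 * ‖1 - z‖⁻¹ + (G * ‖1 - z‖) * (G * E) := by ring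
    _ ≤ ‖c‖ * M ^ 2 * ‖1 - z‖⁻¹ + 2 * (G * E) := by
        gcongr
        · exact norm_sumAt_geomSeries_le hz.le
        · exact norm_sumAt_geomSeries_mul_norm_one_sub_le hz.le
    _ ≤ _ := by linarith

theorem circleAverage_geomSeries_mul_le (hR : R ∈ discSeries) (c : ℂ) (M : ℕ) {τ : ℝ} (hτ : 0 < τ)
    (h0 : 0 ≤ ρ) (h1 : ρ < 1) :
    circleAverage (fun z => ‖sumAt (geomSeries M) z‖ ^ 2 * ‖sumAt R z‖) 0 ρ ≤
      ‖c‖ * M ^ 2 * circleAverage (fun z => ‖1 - z‖⁻¹) 0 ρ +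
      τ * circleAverage (fun z => ‖sumAt (geomSeries M) z‖ ^ 2) 0 ρ +
      τ⁻¹ * circleAverage (fun z => ‖sumAt (errorSeries R c) z‖ ^ 2) 0 ρ := by
  have contG := continuousOn_sumAt (geomSeries_mem_discSeries M) h1
  have contR := continuousOn_sumAt hR h1
  have contE := continuousOn_sumAt (errorSeries_mem_discSeries hR c) h1
  have one_sub_ne (z : ℂ) (hz : z ∈ closedBall 0 ρ) : ‖1 - z‖ ≠ 0 := by
    rw [norm_ne_zero_iff, sub_ne_zero]
    rintro rfl
    exact absurd (mem_closedBall_zero_iff.mp hz) (by simpa using h1)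
  have : ContinuousOn (fun z : ℂ => ‖1 - z‖⁻¹) (closedBall 0 ρ) :=
    ContinuousOn.inv₀ (by fun_prop) one_sub_ne
  simp only [← circleAverage_const_mul]
  rw [← circleAverage_fun_add, ← circleAverage_fun_add]
  · exact circleAverage_mono
      (circleIntegrable_of_continuousOn_closedBall h0 (by fun_prop))
      (circleIntegrable_of_continuousOn_closedBall h0 (by fun_prop))
      fun z hz => norm_sq_sumAt_geomSeries_mul_le hR c M hτ (norm_lt_one_of_mem_sphere h0 h1 hz)
  all_goals exact circleIntegrable_of_continuousOn_closedBall h0 (by fun_prop)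

theorem sqrt_norm_sumAt_mul_le_circleAverage {F : ℂ⟦X⟧} (hF : F ∈ discSeries)
    (hint : F ∈ (PowerSeries.map (Int.castRingHom ℂ)).range) {s : ℕ} (hs : 2 ≤ s) (M : ℕ)
    (h0 : 0 ≤ ρ) (h1 : ρ < 1) :
    √‖sumAt (F ^ s) (ρ ^ 2 : ℝ)‖ * circleAverage (fun z => ‖sumAt (geomSeries M) z‖ ^ 2) 0 ρ ≤
      circleAverage (fun z => ‖sumAt (geomSeries M) z‖ ^ 2 * ‖sumAt (F ^ s) z‖) 0 ρ := by
  have hG := geomSeries_mem_discSeries M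
  have hx := norm_ofReal_sq_lt_one h0 h1
  have norm_G : ‖sumAt (geomSeries M) (ρ ^ 2 : ℝ)‖ =
      circleAverage (fun z => ‖sumAt (geomSeries M) z‖ ^ 2) 0 ρ := by
    rw [circleAverage_norm_sq_sumAt_geomSeries h0 h1, sumAt_geomSeries,
      ← Complex.norm_of_nonneg (r := ∑ i ∈ range M, (ρ ^ 2) ^ i) (by positivity)]
    push_cast
    rfl
  have base := norm_sumAt_le_circleAverage_norm_sq (mul_mem hG hF)
    (mul_mem (geomSeries_mem_range M) hint) h0 h1
  rw [sumAt_mul hG hF hx, norm_mul, norm_G] at base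
  have sqrt_pow : √‖sumAt F (ρ ^ 2 : ℝ)‖ ^ s = √‖sumAt (F ^ s) (ρ ^ 2 : ℝ)‖ := by
    rw [sumAt_pow hF hx, norm_pow, ← sq_eq_sq₀ (by positivity) (sqrt_nonneg _),
      sq_sqrt (by positivity), ← pow_mul, mul_comm, pow_mul, sq_sqrt (norm_nonneg _)]
  have contG : ContinuousOn (fun z => ‖sumAt (geomSeries M) z‖ ^ 2) (closedBall 0 ρ) :=
    (continuousOn_sumAt hG h1).norm.pow 2
  rw [← sqrt_pow]
  refine (pow_mul_circleAverage_le h0 contG (continuousOn_sumAt hF h1).norm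
    (fun z => sq_nonneg _) (fun z => norm_nonneg _) (sqrt_nonneg _) hs ?_).trans_eq
    (circleAverage_congr_sphere fun z hz => ?_)
  · rw [sq_sqrt (norm_nonneg _), mul_comm]
    refine base.trans_eq (circleAverage_congr_sphere fun z hz => ?_)
    rw [sumAt_mul hG hF (norm_lt_one_of_mem_sphere h0 h1 hz), norm_mul, mul_pow]
  · rw [sumAt_pow hF (norm_lt_one_of_mem_sphere h0 h1 hz), norm_pow]

/-! ### Asymptotics as the radius tends to one -/

theorem rpow_le_rpow_mul_one_add_div {β t : ℝ} (hβ0 : 0 ≤ β) (hβ1 : β ≤ 1) (hN : 0 < N)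
    (ht : 0 ≤ t) : t ^ β ≤ N ^ β * (1 + t / N) := by
  have hdiv : 0 ≤ t / N := by positivity
  calc t ^ β = N ^ β * (t / N) ^ β := by
        rw [← mul_rpow hN.le hdiv, mul_div_cancel₀ t hN.ne']
    _ ≤ N ^ β * (1 + t / N) ^ β := by gcongr; linarith
    _ ≤ N ^ β * (1 + t / N) := by
        gcongr
        exact (rpow_le_rpow_of_exponent_le (by linarith) hβ1).trans_eq (rpow_one _)

theorem one_sub_inv_nonneg (hN : 1 ≤ N) : 0 ≤ 1 - N⁻¹ :=
  sub_nonneg.mpr (inv_le_one_of_one_le₀ hN)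

theorem one_sub_inv_lt_one (hN : 1 ≤ N) : 1 - N⁻¹ < 1 :=
  sub_lt_self 1 (inv_pos.mpr (one_pos.trans_le hN))

theorem norm_ofReal_one_sub_inv_lt_one (hN : 1 ≤ N) : ‖((1 - N⁻¹ : ℝ) : ℂ)‖ < 1 := by
  rw [Complex.norm_of_nonneg (one_sub_inv_nonneg hN)]
  exact one_sub_inv_lt_one hN

theorem sqrt_one_sub_inv_lt_one (hN : 1 ≤ N) : √(1 - N⁻¹) < 1 := by
  simpa using sqrt_lt_sqrt (one_sub_inv_nonneg hN) (one_sub_inv_lt_one hN)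

theorem le_of_hasSum_of_le_rpow {u : ℕ → ℝ} {a B β : ℝ} (hB : 0 ≤ B) (hβ0 : 0 ≤ β) (hβ1 : β ≤ 1)
    (hN : 1 ≤ N) (hu : ∀ n : ℕ, u n ≤ B * (n + 1 : ℝ) ^ β)
    (ha : HasSum (fun n => u n * (1 - N⁻¹) ^ n) a) : a ≤ 2 * B * N ^ (β + 1) := by
  have hN0 : 0 < N := by linarith
  have x_nonneg := one_sub_inv_nonneg hN
  have geometric : HasSum (fun n => (1 - N⁻¹) ^ n) N := by
    simpa using hasSum_geometric_of_lt_one x_nonneg (one_sub_inv_lt_one hN)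
  have arith_geometric : HasSum (fun n : ℕ => (n + 1 : ℝ) * (1 - N⁻¹) ^ n) (N ^ 2) := by
    simpa using hasSum_choose_mul_geometric_of_norm_lt_one 1
      ((norm_of_nonneg x_nonneg).trans_lt (one_sub_inv_lt_one hN))
  have majorant := (geometric.add (arith_geometric.mul_left N⁻¹)).mul_left (B * N ^ β)
  refine (hasSum_le (fun n => ?_) ha majorant).trans_eq ?_
  · calc u n * (1 - N⁻¹) ^ n
        ≤ B * (N ^ β * (1 + (n + 1) / N)) * (1 - N⁻¹) ^ n := by
          gcongr
          exact (hu n).trans (by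
            gcongr; exact rpow_le_rpow_mul_one_add_div hβ0 hβ1 hN0 (by positivity))
      _ = _ := by ring
  · rw [rpow_add_one hN0.ne']
    field_simp
    norm_num

variable {α K : ℝ}

theorem norm_sumAt_le_of_norm_coeff_le (hp : p ∈ discSeries) (hN : 1 ≤ N) (hK : 0 ≤ K)
    (hα0 : 0 ≤ α) (hα1 : α ≤ 1) (h : ∀ n : ℕ, ‖coeff n p‖ ≤ K * (n + 1 : ℝ) ^ α) :
    ‖sumAt p (1 - N⁻¹ : ℝ)‖ ≤ 2 * K * N ^ (α + 1) := by
  have hx := norm_ofReal_one_sub_inv_lt_one hN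
  refine (norm_tsum_le_tsum_norm (hp _ hx)).trans
    (le_of_hasSum_of_le_rpow hK hα0 hα1 hN h ?_)
  convert (hp _ hx).hasSum using 2 with n
  rw [norm_mul, norm_pow, Complex.norm_of_nonneg (one_sub_inv_nonneg hN)]

theorem circleAverage_norm_sq_sumAt_le_of_norm_coeff_le (hp : p ∈ discSeries) (hN : 1 ≤ N)
    (hα0 : 0 ≤ α) (hα1 : α ≤ 1 / 2) (h : ∀ n : ℕ, ‖coeff n p‖ ≤ K * (n + 1 : ℝ) ^ α) :
    circleAverage (fun z => ‖sumAt p z‖ ^ 2) 0 √(1 - N⁻¹) ≤ 2 * K ^ 2 * N ^ (2 * α + 1) := by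
  have parseval := hasSum_circleAverage_norm_sq_sumAt hp (sqrt_nonneg (1 - N⁻¹))
    (sqrt_one_sub_inv_lt_one hN)
  rw [sq_sqrt (one_sub_inv_nonneg hN)] at parseval
  refine le_of_hasSum_of_le_rpow (sq_nonneg K) (by linarith) (by linarith) hN (fun n => ?_) parseval
  rw [two_mul, rpow_add (by positivity), ← sq, ← mul_pow]
  gcongr
  exact h n

theorem circleAverage_norm_one_sub_inv_le_log (hN : 2 ≤ N) :
    circleAverage (fun z => ‖1 - z‖⁻¹) 0 √(1 - N⁻¹) ≤ 2 * log N := by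
  have x_ge_half : 1 / 2 ≤ 1 - N⁻¹ := by
    linarith [inv_anti₀ two_pos hN]
  have kernel := circleAverage_norm_one_sub_inv_le (sqrt_pos.mpr (by linarith : 0 < 1 - N⁻¹))
    (sqrt_one_sub_inv_lt_one (by linarith))
  rw [sq_sqrt (by linarith), sub_sub_cancel, log_inv, neg_neg] at kernel
  refine kernel.trans ?_
  gcongr
  · exact log_nonneg (by linarith)
  · simpa using inv_anti₀ one_half_pos x_ge_half

theorem eventually_norm_sumAt_ge (hR : R ∈ discSeries) (hc : c ≠ 0) (hα0 : 0 ≤ α) (hα1 : α < 1)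
    (hK : 0 ≤ K) (h : ∀ n : ℕ, ‖coeff n (errorSeries R c)‖ ≤ K * (n + 1 : ℝ) ^ α) :
    ∀ᶠ N : ℝ in atTop, ‖c‖ * N / 4 ≤ ‖sumAt R (1 - N⁻¹ : ℝ)‖ := by
  have small := ((tendsto_rpow_atTop (sub_pos.mpr hα1)).const_mul_atTop
    (half_pos (norm_pos_iff.mpr hc))).eventually_ge_atTop (2 * K)
  filter_upwards [small, eventually_ge_atTop 1] with N small hN
  have hN0 : 0 < N := by linarith
  have value := sumAt_eq_add_mul_errorSeries hR c (norm_ofReal_one_sub_inv_lt_one hN)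
  have one_sub : (1 : ℂ) - (1 - N⁻¹ : ℝ) = (N : ℂ)⁻¹ := by push_cast; ring
  have main : ‖c * (N : ℂ)‖ = ‖c‖ * N := by rw [norm_mul, Complex.norm_of_nonneg hN0.le]
  have error : ‖(N : ℂ)⁻¹ * sumAt (errorSeries R c) (1 - N⁻¹ : ℝ)‖ ≤ 2 * K * N ^ α := by
    rw [norm_mul, norm_inv, Complex.norm_of_nonneg hN0.le, inv_mul_le_iff₀ hN0]
    refine (norm_sumAt_le_of_norm_coeff_le (errorSeries_mem_discSeries hR c) hN hK hα0 hα1.le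
      h).trans_eq ?_
    rw [rpow_add_one hN0.ne']
    ring
  rw [one_sub, inv_inv] at value
  have error_small : 2 * K * N ^ α ≤ ‖c‖ / 2 * N := by
    calc 2 * K * N ^ α ≤ ‖c‖ / 2 * N ^ (1 - α) * N ^ α := by gcongr
      _ = ‖c‖ / 2 * N := by rw [mul_assoc, ← rpow_add hN0, sub_add_cancel, rpow_one]
  have triangle := norm_sub_le_norm_add (c * (N : ℂ))
    ((N : ℂ)⁻¹ * sumAt (errorSeries R c) (1 - N⁻¹ : ℝ))
  rw [← value, main] at triangle
  linarith [mul_nonneg (norm_nonneg c) hN0.le]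

theorem half_le_geom_sum {x : ℝ} (hx : 0 ≤ x) (hM : M * (1 - x) ≤ 1 / 2) :
    (M : ℝ) / 2 ≤ ∑ i ∈ range M, x ^ i := by
  have term (i : ℕ) (hi : i ∈ range M) : 1 / 2 ≤ x ^ i := by
    obtain hx1 | hx1 := le_total 1 x
    · exact one_half_lt_one.le.trans (one_le_pow₀ hx1)
    have bernoulli := one_add_mul_le_pow (a := x - 1) (by linarith) i
    have : (i : ℝ) * (1 - x) ≤ M * (1 - x) := by
      exact mul_le_mul_of_nonneg_right (mod_cast (mem_range.mp hi).le) (by linarith)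
    rw [add_sub_cancel] at bernoulli
    linarith
  simpa [div_eq_mul_inv] using card_nsmul_le_sum _ _ _ term

theorem sqrt_norm_sumAt_mul_geom_sum_le {F : ℂ⟦X⟧} (hF : F ∈ discSeries)
    (hint : F ∈ (PowerSeries.map (Int.castRingHom ℂ)).range) {s : ℕ} (hs : 2 ≤ s)
    (hα0 : 0 ≤ α) (hα1 : α ≤ 1 / 2)
    (h : ∀ n : ℕ, ‖coeff n (errorSeries (F ^ s) c)‖ ≤ K * (n + 1 : ℝ) ^ α) (hN : 2 ≤ N) (M : ℕ)
    (hne : sumAt (F ^ s) (1 - N⁻¹ : ℝ) ≠ 0) :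
    √‖sumAt (F ^ s) (1 - N⁻¹ : ℝ)‖ * ∑ i ∈ range M, (1 - N⁻¹) ^ i ≤
      4 * ‖c‖ * M ^ 2 * log N +
        8 * K ^ 2 * N ^ (2 * α + 1) / √‖sumAt (F ^ s) (1 - N⁻¹ : ℝ)‖ := by
  set L := √‖sumAt (F ^ s) (1 - N⁻¹ : ℝ)‖ with hL
  have hL0 : 0 < L := sqrt_pos.mpr (norm_pos_iff.mpr hne)
  have h0 := sqrt_nonneg (1 - N⁻¹)
  have h1 := sqrt_one_sub_inv_lt_one (by linarith : 1 ≤ N)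
  have hR := pow_mem hF s
  have lower := sqrt_norm_sumAt_mul_le_circleAverage hF hint hs M h0 h1
  have upper := circleAverage_geomSeries_mul_le hR c M (half_pos hL0) h0 h1
  rw [circleAverage_norm_sq_sumAt_geomSeries h0 h1, sq_sqrt (one_sub_inv_nonneg (by linarith))]
    at lower upper
  rw [← hL] at lower
  have kernel : ‖c‖ * M ^ 2 * circleAverage (fun z => ‖1 - z‖⁻¹) 0 √(1 - N⁻¹) ≤
      ‖c‖ * M ^ 2 * (2 * log N) := by
    gcongr
    exact circleAverage_norm_one_sub_inv_le_log hN
  have error : (L / 2)⁻¹ * circleAverage (fun z => ‖sumAt (errorSeries (F ^ s) c) z‖ ^ 2) 0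
      √(1 - N⁻¹) ≤ (L / 2)⁻¹ * (2 * K ^ 2 * N ^ (2 * α + 1)) := by
    gcongr
    exact circleAverage_norm_sq_sumAt_le_of_norm_coeff_le (errorSeries_mem_discSeries hR c)
      (by linarith) hα0 hα1 h
  have half : (L / 2)⁻¹ * (2 * K ^ 2 * N ^ (2 * α + 1)) =
      8 * K ^ 2 * N ^ (2 * α + 1) / L / 2 := by ring
  linarith

theorem not_eventually_rpow_le_log_add {a b κ δ : ℝ} (hκ : 0 < κ) (hδ : 0 < δ) :
    ¬ ∀ᶠ N : ℝ in atTop, κ * N ^ δ ≤ a * log N + b := by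
  intro h
  have small : (fun N : ℝ => a * log N + b) =o[atTop] fun N => N ^ δ :=
    ((isLittleO_log_rpow_atTop hδ).const_mul_left a).add
      (Asymptotics.isLittleO_const_left.mpr <| .inr <|
        tendsto_norm_atTop_atTop.comp (tendsto_rpow_atTop hδ))
  obtain ⟨N, hN, hle, hsmall⟩ :=
    ((eventually_gt_atTop 0).and (h.and (small.bound (half_pos hκ)))).exists
  have hpos : 0 < N ^ δ := rpow_pos_of_pos hN δ
  rw [norm_of_nonneg hpos.le] at hsmall
  nlinarith [le_norm_self (a * log N + b)]

theorem rpow_le_half {β : ℝ} (hβ : β ≤ 1 / 2) (hN : 4 ≤ N) : N ^ β ≤ N / 2 := by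
  have le_sqrt : N ^ β ≤ √N := by
    rw [sqrt_eq_rpow]
    exact rpow_le_rpow_of_exponent_le (by linarith) hβ
  have two_le : 2 ≤ √N := le_sqrt_of_sq_le (by linarith)
  nlinarith [sq_sqrt (by linarith : 0 ≤ N)]

theorem sqrt_mul_sqrt_mul_le_of_norm_sumAt_ge {F : ℂ⟦X⟧} (hF : F ∈ discSeries)
    (hint : F ∈ (PowerSeries.map (Int.castRingHom ℂ)).range) {s : ℕ} (hs : 2 ≤ s) (hc : c ≠ 0)
    (hα0 : 0 ≤ α) (hα1 : α ≤ 1 / 2)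
    (h : ∀ n : ℕ, ‖coeff n (errorSeries (F ^ s) c)‖ ≤ K * (n + 1 : ℝ) ^ α)
    (hlarge : ‖c‖ * N / 4 ≤ ‖sumAt (F ^ s) (1 - N⁻¹ : ℝ)‖) {y : ℝ} (hy : 1 ≤ y)
    (hyN : y ≤ N / 2) :
    √‖c‖ / 2 * √N * (y / 4) ≤
      4 * ‖c‖ * y ^ 2 * log N + 8 * K ^ 2 * N ^ (2 * α + 1) / (√‖c‖ / 2 * √N) := by
  have hN : 2 ≤ N := by linarith
  have hN0 : 0 < N := by linarith
  have sqrt_ge : √‖c‖ / 2 * √N ≤ √‖sumAt (F ^ s) (1 - N⁻¹ : ℝ)‖ := by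
    refine le_sqrt_of_sq_le ?_
    rw [mul_pow, div_pow, sq_sqrt (norm_nonneg c), sq_sqrt hN0.le]
    linarith
  have ne_zero : sumAt (F ^ s) (1 - N⁻¹ : ℝ) ≠ 0 :=
    norm_pos_iff.mp (lt_of_lt_of_le (by positivity) hlarge)
  have floor_le : (⌊y⌋₊ : ℝ) ≤ y := Nat.floor_le (by linarith)
  have geom_ge : y / 4 ≤ ∑ i ∈ range ⌊y⌋₊, (1 - N⁻¹) ^ i := by
    have := half_le_geom_sum (M := ⌊y⌋₊) (one_sub_inv_nonneg (by linarith : 1 ≤ N)) (by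
      rw [sub_sub_cancel, ← div_eq_mul_inv, div_le_iff₀ hN0]
      linarith)
    linarith [Nat.div_two_lt_floor hy]
  have hlog : 0 ≤ log N := log_nonneg (by linarith)
  calc √‖c‖ / 2 * √N * (y / 4)
      ≤ √‖sumAt (F ^ s) (1 - N⁻¹ : ℝ)‖ * ∑ i ∈ range ⌊y⌋₊, (1 - N⁻¹) ^ i := by gcongr
    _ ≤ 4 * ‖c‖ * ⌊y⌋₊ ^ 2 * log N +
          8 * K ^ 2 * N ^ (2 * α + 1) / √‖sumAt (F ^ s) (1 - N⁻¹ : ℝ)‖ :=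
        sqrt_norm_sumAt_mul_geom_sum_le hF hint hs hα0 hα1 h hN _ ne_zero
    _ ≤ _ := by gcongr

theorem eventually_rpow_le_log {F : ℂ⟦X⟧} (hF : F ∈ discSeries)
    (hint : F ∈ (PowerSeries.map (Int.castRingHom ℂ)).range) {s : ℕ} (hs : 2 ≤ s) (hc : c ≠ 0)
    (hα0 : 0 ≤ α) (hα1 : α ≤ 1 / 4) (hK : 0 ≤ K)
    (h : ∀ n : ℕ, ‖coeff n (errorSeries (F ^ s) c)‖ ≤ K * (n + 1 : ℝ) ^ α) :
    ∀ᶠ N : ℝ in atTop, √‖c‖ / 8 * N ^ (1 / 4 - α) ≤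
      4 * ‖c‖ * log N + 16 * K ^ 2 / √‖c‖ := by
  have : 0 < √‖c‖ := sqrt_pos.mpr (norm_pos_iff.mpr hc)
  filter_upwards [eventually_norm_sumAt_ge (pow_mem hF s) hc hα0 (by linarith) hK h,
    eventually_ge_atTop 4] with N hlarge hN
  have hN0 : 0 < N := by linarith
  have key := sqrt_mul_sqrt_mul_le_of_norm_sumAt_ge hF hint hs hc hα0 (by linarith) h hlarge
    (one_le_rpow (by linarith) (by linarith)) (rpow_le_half (by linarith : 1 / 4 + α ≤ 1 / 2) hN)
  have exp_left : √N * N ^ (1 / 4 + α) = N ^ (1 / 4 - α) * N ^ (2 * α + 1 / 2) := by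
    rw [sqrt_eq_rpow, ← rpow_add hN0, ← rpow_add hN0]; ring_nf
  have exp_sq : (N ^ (1 / 4 + α)) ^ 2 = N ^ (2 * α + 1 / 2) := by
    rw [← rpow_mul_natCast hN0.le]; ring_nf
  have exp_error : N ^ (2 * α + 1) = N ^ (2 * α + 1 / 2) * √N := by
    rw [sqrt_eq_rpow, ← rpow_add hN0]; ring_nf
  rw [exp_sq, exp_error] at key
  refine le_of_mul_le_mul_right ?_ (rpow_pos_of_pos hN0 (2 * α + 1 / 2))
  calc √‖c‖ / 8 * N ^ (1 / 4 - α) * N ^ (2 * α + 1 / 2)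
      = √‖c‖ / 2 * √N * (N ^ (1 / 4 + α) / 4) := by
        linear_combination -(√‖c‖ / 8) * exp_left
    _ ≤ _ := key
    _ = _ := by field_simp; ring

theorem not_exists_norm_sum_coeff_pow_sub_le {F : ℂ⟦X⟧} (hF : F ∈ discSeries)
    (hint : F ∈ (PowerSeries.map (Int.castRingHom ℂ)).range) {s : ℕ} (hs : 2 ≤ s) (hc : c ≠ 0)
    (hα0 : 0 ≤ α) (hα1 : α < 1 / 4) :
    ¬ ∃ K : ℝ, ∀ n : ℕ,
      ‖∑ j ∈ range (n + 1), (coeff j (F ^ s) - c)‖ ≤ K * (n + 1 : ℝ) ^ α := by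
  rintro ⟨K, h⟩
  have hK : 0 ≤ K := (norm_nonneg _).trans (by simpa using h 0)
  simp only [← coeff_errorSeries] at h
  exact not_eventually_rpow_le_log_add (by positivity) (sub_pos.mpr hα1)
    (eventually_rpow_le_log hF hint hs hc hα0 hα1.le hK h)

/-! ### Representation functions -/

open Classical in
/-- The generating series of the dilate `{k * a | a ∈ A}`. -/
noncomputable def dilateSeries (A : Set ℕ) (k : ℕ) : ℤ⟦X⟧ :=
  PowerSeries.mk fun n => if ∃ a ∈ A, n = k * a then 1 else 0

theorem coeff_prod_dilateSeries {ι : Type*} [Fintype ι] (A : Set ℕ) {k : ι → ℕ}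
    (hk : ∀ x, 0 < k x) (n : ℕ) :
    coeff n (∏ x, dilateSeries A (k x)) =
      Nat.card {a : ι → ℕ // (∀ x, a x ∈ A) ∧ n = ∑ x, k x * a x} := by
  classical
  let dilate (a : ι → ℕ) : ι →₀ ℕ := Finsupp.equivFunOnFinite.symm fun x => k x * a x
  have dilate_injective : Function.Injective dilate := fun a b hab => funext fun x =>
    Nat.eq_of_mul_eq_mul_left (hk x) (DFunLike.congr_fun hab x)
  have image_eq : ((Finset.univ.finsuppAntidiag n).filter
      fun l => ∀ x, ∃ a ∈ A, l x = k x * a : Set (ι →₀ ℕ)) =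
      dilate '' {a | (∀ x, a x ∈ A) ∧ n = ∑ x, k x * a x} := by
    ext l
    simp only [mem_coe, mem_filter, mem_finsuppAntidiag, Set.mem_image, Set.mem_ofPred_eq]
    constructor
    · rintro ⟨⟨hsum, -⟩, hl⟩
      choose a ha hla using hl
      exact ⟨a, ⟨ha, by simp only [← hsum, hla]⟩, Finsupp.ext fun x => (hla x).symm⟩
    · rintro ⟨a, ⟨ha, hn⟩, rfl⟩
      exact ⟨⟨hn.symm, subset_univ _⟩, fun x => ⟨a x, ha x, rfl⟩⟩
  have card_eq := Set.ncard_image_of_injective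
    {a | (∀ x, a x ∈ A) ∧ n = ∑ x, k x * a x} dilate_injective
  rw [← image_eq, Set.ncard_coe_finset] at card_eq
  refine Eq.trans ?_ (congrArg Nat.cast card_eq)
  simp only [coeff_prod, dilateSeries, coeff_mk, prod_ite_zero, prod_const_one, sum_boole,
    mem_univ, true_imp_iff]

theorem coeff_prod_dilateSeries_pow (A : Set ℕ) {r : ℕ} {k : Fin r → ℕ} (m : Fin r → ℕ)
    (hk : ∀ i, 0 < k i) (n : ℕ) :
    coeff n (∏ i, dilateSeries A (k i) ^ m i) = reprFn A r k m n := by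
  have prod_eq : ∏ i, dilateSeries A (k i) ^ m i =
      ∏ x : (i : Fin r) × Fin (m i), dilateSeries A (k x.1) := by
    simp [Fintype.prod_sigma]
  rw [prod_eq, coeff_prod_dilateSeries A (k := fun x : (i : Fin r) × Fin (m i) => k x.1)
    (fun x => hk x.1), reprFn]
  refine congrArg _ (Nat.card_congr ((Equiv.piCurry fun _ _ => ℕ).subtypeEquiv fun a => ?_))
  simp [Sigma.forall, Fintype.sum_sigma, mul_sum, Equiv.piCurry_apply, Sigma.curry]

theorem map_dilateSeries_mem_discSeries (A : Set ℕ) (k : ℕ) :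
    PowerSeries.map (Int.castRingHom ℂ) (dilateSeries A k) ∈ discSeries :=
  mem_discSeries_of_norm_coeff_le (B := 1) fun n => by
    rw [coeff_map, dilateSeries, coeff_mk]
    split_ifs <;> simp

theorem abs_sum_range_le_of_abs_sum_Icc_le {u : ℕ → ℝ} {β : ℝ}
    (h : ∀ n : ℕ, 1 ≤ n → |∑ j ∈ Icc 1 n, u j| ≤ K * (n : ℝ) ^ β) (n : ℕ) :
    |∑ j ∈ range (n + 1), u j| ≤ (|u 0| + |K|) * (n + 1 : ℝ) ^ max β 0 := by
  have one_le : (1 : ℝ) ≤ (n + 1 : ℝ) ^ max β 0 :=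
    one_le_rpow (by linarith [(n.cast_nonneg : (0 : ℝ) ≤ n)]) (le_max_right β 0)
  have tail_le : |∑ j ∈ Icc 1 n, u j| ≤ |K| * (n + 1 : ℝ) ^ max β 0 := by
    obtain rfl | hn := n.eq_zero_or_pos
    · simp
    have hn1 : (1 : ℝ) ≤ n := mod_cast hn
    calc |∑ j ∈ Icc 1 n, u j| ≤ K * (n : ℝ) ^ β := h n hn
      _ ≤ |K| * (n : ℝ) ^ max β 0 := by gcongr; exacts [le_abs_self K, le_max_left β 0]
      _ ≤ |K| * (n + 1 : ℝ) ^ max β 0 := by gcongr; linarith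
  rw [range_eq_Ico, sum_eq_sum_Ico_succ_bot n.add_one_pos, zero_add, Ico_add_one_right_eq_Icc,
    add_mul]
  exact (abs_add_le _ _).trans
    (add_le_add (le_mul_of_one_le_right (abs_nonneg _) one_le) tail_le)

theorem stmt5_general (A : Set ℕ) {r : ℕ} {k m : Fin r → ℕ} (hk : ∀ i, 0 < k i) {s : ℕ}
    (hs : 2 ≤ s) (hsm : ∀ i, s ∣ m i) {c : ℝ} (hc : c ≠ 0) {ε : ℝ} (hε : 0 < ε) :
    ¬ ∃ K : ℝ, ∀ n : ℕ, 1 ≤ n →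
      |∑ j ∈ Finset.Icc 1 n, ((reprFn A r k m j : ℝ) - c)| ≤
        K * (n : ℝ) ^ ((1 : ℝ) / 4 - ε) := by
  rintro ⟨K, hK⟩
  set F := ∏ i, dilateSeries A (k i) ^ (m i / s) with hF
  have F_pow : F ^ s = ∏ i, dilateSeries A (k i) ^ m i := by
    simp only [hF, ← prod_pow, ← pow_mul, Nat.div_mul_cancel (hsm _)]
  have F_mem : PowerSeries.map (Int.castRingHom ℂ) F ∈ discSeries := by
    simp only [hF, map_prod, map_pow]
    exact prod_mem fun i _ => pow_mem (map_dilateSeries_mem_discSeries A (k i)) _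
  refine not_exists_norm_sum_coeff_pow_sub_le F_mem ⟨F, rfl⟩ hs (Complex.ofReal_ne_zero.mpr hc)
    (le_max_right (1 / 4 - ε) 0) (max_lt (by linarith) (by norm_num))
    ⟨|reprFn A r k m 0 - c| + |K|, fun n => ?_⟩
  have coeff_eq (j : ℕ) : coeff j (PowerSeries.map (Int.castRingHom ℂ) F ^ s) - (c : ℂ) =
      ((reprFn A r k m j - c : ℝ) : ℂ) := by
    rw [← map_pow, coeff_map, F_pow, coeff_prod_dilateSeries_pow A m hk]
    simp
  simp only [coeff_eq, ← Complex.ofReal_sum, Complex.norm_real, norm_eq_abs]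
  exact abs_sum_range_le_of_abs_sum_Icc_le hK n

theorem stmt5 (A : Set ℕ) (hA : A.Infinite) (hApos : ∀ a ∈ A, 0 < a)
    (r : ℕ) (hr : 1 ≤ r) (k m : Fin r → ℕ)
    (hk : ∀ i, 0 < k i) (hkmono : StrictMono k) (hm : ∀ i, 0 < m i)
    (s : ℕ) (hs : s = Finset.univ.gcd m) (hs2 : 2 ≤ s)
    (c : ℝ) (hc : 0 < c) (ε : ℝ) (hε : 0 < ε) :
    ¬ ∃ K : ℝ, ∀ n : ℕ, 1 ≤ n →
      |∑ j ∈ Finset.Icc 1 n, ((reprFn A r k m j : ℝ) - c)| ≤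
        K * (n : ℝ) ^ ((1 : ℝ) / 4 - ε) :=
  stmt5_general A hk hs2 (fun i => hs ▸ Finset.gcd_dvd (Finset.mem_univ i)) hc.ne' hε
end

section
/- Let s ≥ 1, d ≥ 0, m ≥ 1 and n ≥ 0 be integers, and let S, Q be polynomials with complex coefficients such that S is not the zero polynomial and Q(1) ≠ 0. If S(z)^s · (1−z)^{d+1} = Q(z) · (1−z^m)^{n·s} as polynomials, then s divides d+1. -/
/-!
Compare the multiplicities of the root `1` on both sides. The powers `S ^ s` and
`(1 - X ^ m) ^ (n * s) = ((1 - X ^ m) ^ n) ^ s` contribute multiples of `s`, and `Q` contributes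
nothing, so the contribution `d + 1` of the remaining factor is a multiple of `s` as well.
-/

section Multiplicity

variable {M : Type*} [CommMonoidWithZero M] [IsCancelMulZero M] {p a b c l : M} {s : ℕ}

theorem dvd_multiplicity_of_pow_mul_eq_mul_pow (hp : Prime p)
    (ha : FiniteMultiplicity p a) (hl : FiniteMultiplicity p l) (hb : ¬p ∣ b)
    (h : a ^ s * l = b * c ^ s) : s ∣ multiplicity p l := by
  obtain rfl | hs := eq_or_ne s 0
  · have hlb : l = b := by simpa only [pow_zero, one_mul, mul_one] using h
    rw [hlb, multiplicity_eq_zero.2 hb]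
  have hleft : FiniteMultiplicity p (a ^ s * l) := hp.finiteMultiplicity_mul (ha.pow hp) hl
  have hright : FiniteMultiplicity p (b * c ^ s) := h ▸ hleft
  have hc : FiniteMultiplicity p c := by
    have hcs : FiniteMultiplicity p (c ^ s) := hright.mul_right
    rw [← pow_sub_one_mul hs c] at hcs
    exact hcs.mul_right
  have hmul : s * multiplicity p a + multiplicity p l = s * multiplicity p c := calc
    _ = multiplicity p (a ^ s * l) := by rw [multiplicity_mul hp hleft, ha.multiplicity_pow hp]
    _ = multiplicity p (b * c ^ s) := by rw [h]
    _ = s * multiplicity p c := by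
      rw [multiplicity_mul hp hright, multiplicity_eq_zero.2 hb, hc.multiplicity_pow hp, zero_add]
  exact (Nat.dvd_add_right (dvd_mul_right s _)).1 (hmul ▸ dvd_mul_right s _)

end Multiplicity

section Polynomial

open Polynomial

variable {R : Type*} [CommRing R] [IsDomain R]

theorem multiplicity_X_sub_C_C_sub_X_pow (a : R) (k : ℕ) :
    multiplicity (X - C a) ((C a - X) ^ k) = k := by
  have hfin : FiniteMultiplicity (X - C a) (-(X - C a)) :=
    finiteMultiplicity_X_sub_C a (neg_ne_zero.2 (X_sub_C_ne_zero a))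
  rw [← neg_sub X (C a), hfin.multiplicity_pow (prime_X_sub_C a), multiplicity_neg,
    multiplicity_self, mul_one]

theorem stmt8_general {s k : ℕ} {a : R} {S Q T : R[X]} (hS : S ≠ 0) (hQ : Q.eval a ≠ 0)
    (h : S ^ s * (C a - X) ^ k = Q * T ^ s) : s ∣ k := by
  have hlin : (C a - X) ^ k ≠ 0 := pow_ne_zero k (sub_ne_zero.2 (X_ne_C a).symm)
  have hdvd : s ∣ multiplicity (X - C a) ((C a - X) ^ k) :=
    dvd_multiplicity_of_pow_mul_eq_mul_pow (prime_X_sub_C a)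
      (finiteMultiplicity_X_sub_C a hS) (finiteMultiplicity_X_sub_C a hlin)
      (mt dvd_iff_isRoot.1 hQ) h
  rwa [multiplicity_X_sub_C_C_sub_X_pow] at hdvd

end Polynomial

theorem stmt8 (s d m n : ℕ) (hs : 1 ≤ s) (hm : 1 ≤ m)
    (S Q : Polynomial ℂ) (hS : S ≠ 0) (hQ : Q.eval 1 ≠ 0)
    (h : S ^ s * (1 - Polynomial.X) ^ (d + 1) =
        Q * (1 - Polynomial.X ^ m) ^ (n * s)) :
    s ∣ (d + 1) :=
  stmt8_general (T := (1 - Polynomial.X ^ m) ^ n) hS hQ (by rwa [Polynomial.C_1, ← pow_mul])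
end

section
/- For every real r with 0 < r < 1, the average (1/2π)·∫_0^{2π} |1 − r·e^{iθ}|^{−1} dθ equals Σ_{n=0}^{∞} (4^{−n}·C(2n,n))^2 · r^{2n}, where C(2n,n) is the central binomial coefficient. -/
/-!
A function with power series `∑ aₙ (z - c)ⁿ` is, on each circle `|z - c| = |R|` inside its disc of
convergence, the uniform limit of polynomials. Parseval's identity therefore passes from
polynomials to the limit: the average of `|f|²` over the circle is `∑ |aₙ|² R²ⁿ`. Apply this to the
binomial series of `(1 - z)⁻ˢ`, whose squared norm is `|1 - z|⁻²ˢ` for real `s`; for `s = 1/2` its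
coefficients are `4⁻ⁿ C(2n, n)`.
-/

open Filter Metric Real Topology

theorem tendsto_circleAverage_of_tendstoUniformlyOn {ι E : Type*} [NormedAddCommGroup E]
    [NormedSpace ℝ E] {l : Filter ι} [l.IsCountablyGenerated] {F : ι → ℂ → E} {f : ℂ → E} {c : ℂ}
    {R : ℝ} (hF : ∀ᶠ i in l, ContinuousOn (F i) (sphere c |R|))
    (hf : TendstoUniformlyOn F f l (sphere c |R|)) :
    Tendsto (fun i ↦ circleAverage (F i) c R) l (𝓝 (circleAverage f c R)) := by
  have hmaps (t : Set ℝ) : Set.MapsTo (circleMap c R) t (sphere c |R|) :=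
    fun θ _ ↦ circleMap_mem_sphere' c R θ
  refine Tendsto.const_smul (TendstoUniformlyOn.tendsto_intervalIntegral_of_continuousOn ?_ ?_) _
  · exact hF.mono fun i hi ↦ hi.comp (continuous_circleMap c R).continuousOn (hmaps _)
  · exact (hf.comp (circleMap c R)).mono (hmaps _)

theorem circleAverage_sq_norm_sum_mul_sub_pow (t : Finset ℕ) (a : ℕ → ℂ) (c : ℂ) (R : ℝ) :
    circleAverage (fun z ↦ ‖∑ n ∈ t, a n * (z - c) ^ n‖ ^ 2) c R =
      ∑ n ∈ t, ‖a n‖ ^ 2 * R ^ (2 * n) := by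
  let p : Polynomial ℂ := ∑ n ∈ t, Polynomial.monomial n (a n * R ^ n)
  have hcoeff (n : ℕ) : p.coeff n = if n ∈ t then a n * R ^ n else 0 := by
    simp [p, Polynomial.finsetSum_coeff, Polynomial.coeff_monomial]
  have heval (z : ℂ) : p.eval z = ∑ n ∈ t, a n * (R * z + c - c) ^ n := by
    simp [p, Polynomial.eval_finsetSum, mul_pow, mul_assoc]
  have hsupport : p.support ⊆ t := fun n hn ↦ by
    by_contra hnt
    simp [hcoeff, hnt] at hn
  calc circleAverage (fun z ↦ ‖∑ n ∈ t, a n * (z - c) ^ n‖ ^ 2) c R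
      = circleAverage (fun z ↦ ‖p.eval z‖ ^ 2) 0 1 := by
        simp only [circleAverage_eq_circleAverage_zero_one (c := c), heval]
    _ = ∑ n ∈ p.support, ‖p.coeff n‖ ^ 2 := p.sum_sq_norm_coeff_eq_circleAverage.symm
    _ = ∑ n ∈ t, ‖p.coeff n‖ ^ 2 := Finset.sum_subset hsupport fun n _ hn ↦ by
        simp [Polynomial.notMem_support_iff.1 hn]
    _ = ∑ n ∈ t, ‖a n‖ ^ 2 * R ^ (2 * n) := Finset.sum_congr rfl fun n hn ↦ by
        simp [hcoeff, hn, mul_pow, pow_mul, pow_right_comm |R| n 2]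

theorem hasSum_sq_norm_coeff_circleAverage {f : ℂ → ℂ} {p : FormalMultilinearSeries ℂ ℂ ℂ} {c : ℂ}
    {ρ : ENNReal} (hf : HasFPowerSeriesOnBall f p c ρ) {R : ℝ} (hR : ENNReal.ofReal |R| < ρ) :
    HasSum (fun n ↦ ‖p.coeff n‖ ^ 2 * R ^ (2 * n)) (circleAverage (fun z ↦ ‖f z‖ ^ 2) c R) := by
  have hsphere : sphere c |R| ⊆ eball c ρ := fun z hz ↦ by
    rwa [mem_eball, edist_dist, mem_sphere.1 hz]
  have hunif : TendstoUniformlyOn (fun N z ↦ ‖p.partialSum N (z - c)‖ ^ 2) (fun z ↦ ‖f z‖ ^ 2)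
      atTop (sphere c |R|) := by
    have hnorm := uniformContinuous_norm.comp_tendstoLocallyUniformlyOn
      (hf.tendstoLocallyUniformlyOn'.mono hsphere)
    have hnorm_cont : ContinuousOn (fun z ↦ ‖f z‖) (sphere c |R|) :=
      (hf.continuousOn.mono hsphere).norm
    rw [← tendstoLocallyUniformlyOn_iff_tendstoUniformlyOn_of_compact (isCompact_sphere c |R|)]
    simpa only [pow_two] using! hnorm.mul₀ hnorm hnorm_cont hnorm_cont
  have hpartial_cont (N : ℕ) : Continuous fun z ↦ ‖p.partialSum N (z - c)‖ ^ 2 :=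
    (((p.partialSum_continuous N).comp (continuous_sub_right c)).norm).pow 2
  have hpartial_avg (N : ℕ) : circleAverage (fun z ↦ ‖p.partialSum N (z - c)‖ ^ 2) c R =
      ∑ n ∈ Finset.range N, ‖p.coeff n‖ ^ 2 * R ^ (2 * n) := by
    rw [← circleAverage_sq_norm_sum_mul_sub_pow (c := c)]
    simp only [FormalMultilinearSeries.partialSum, FormalMultilinearSeries.apply_eq_pow_smul_coeff,
      smul_eq_mul, mul_comm]
  rw [hasSum_iff_tendsto_nat_of_nonneg fun n ↦ by rw [pow_mul]; positivity]
  simpa only [hpartial_avg] using tendsto_circleAverage_of_tendstoUniformlyOn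
    (Eventually.of_forall fun N ↦ (hpartial_cont N).continuousOn) hunif

section HalfBinomial

variable (K : Type*) [Field K] [CharZero K]

theorem eval_ascPochhammer_inv_two (n : ℕ) :
    (ascPochhammer K n).eval 2⁻¹ = n.factorial * (4⁻¹ ^ n * n.centralBinom) := by
  induction n with
  | zero => simp
  | succ n ih =>
    have hrec : ((n : K) + 1) * (n + 1).centralBinom = 2 * (2 * n + 1) * n.centralBinom :=
      mod_cast Nat.succ_mul_centralBinom_succ n
    rw [ascPochhammer_succ_eval, ih, Nat.factorial_succ]
    push_cast
    linear_combination -(n.factorial * 4⁻¹ ^ (n + 1) : K) * hrec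

theorem multichoose_inv_two [BinomialRing K] (n : ℕ) :
    Ring.multichoose (2⁻¹ : K) n = 4⁻¹ ^ n * n.centralBinom := by
  have hfactorial := Ring.factorial_nsmul_multichoose_eq_ascPochhammer (2⁻¹ : K) n
  rw [Polynomial.ascPochhammer_smeval_eq_eval, eval_ascPochhammer_inv_two, nsmul_eq_mul]
    at hfactorial
  exact mul_left_cancel₀ (mod_cast n.factorial_ne_zero) hfactorial

end HalfBinomial

theorem hasSum_sq_norm_multichoose_circleAverage (s : ℂ) {R : ℝ} (hR : |R| < 1) :
    HasSum (fun n ↦ ‖Ring.multichoose s n‖ ^ 2 * R ^ (2 * n))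
      (circleAverage (fun z ↦ ‖((1 - z) ^ s)⁻¹‖ ^ 2) 0 R) := by
  simpa only [one_div, FormalMultilinearSeries.coeff_ofScalars, ← Ring.multichoose_eq] using
    hasSum_sq_norm_coeff_circleAverage (Complex.one_div_one_sub_cpow_hasFPowerSeriesOnBall_zero s)
      (ENNReal.ofReal_lt_one.2 hR)

theorem sq_norm_inv_cpow_ofReal (z : ℂ) (s : ℝ) :
    ‖(z ^ (s : ℂ))⁻¹‖ ^ 2 = ‖z‖ ^ (-(2 * s)) := by
  rw [norm_inv, Complex.norm_cpow_real, inv_pow, rpow_neg (norm_nonneg z),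
    mul_comm, rpow_mul (norm_nonneg z), rpow_two]

theorem stmt9_general (s r : ℝ) (hr : |r| < 1) :
    HasSum (fun n : ℕ ↦ Ring.multichoose s n ^ 2 * r ^ (2 * n))
      ((1 / (2 * π)) * ∫ θ in (0:ℝ)..(2 * π),
        ‖1 - (r : ℂ) * Complex.exp (θ * Complex.I)‖ ^ (-(2 * s))) := by
  have hcoeff (n : ℕ) : ‖Ring.multichoose (s : ℂ) n‖ ^ 2 = Ring.multichoose s n ^ 2 := by
    rw [← Complex.ofRealHom_eq_coe, ← Ring.map_multichoose, Complex.ofRealHom_eq_coe,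
      Complex.norm_real, norm_eq_abs, sq_abs]
  simpa only [hcoeff, sq_norm_inv_cpow_ofReal, circleAverage_def, circleMap, zero_add,
    smul_eq_mul, one_div] using hasSum_sq_norm_multichoose_circleAverage s hr

theorem stmt9 (r : ℝ) (hr0 : 0 < r) (hr1 : r < 1) :
    (1 / (2 * Real.pi)) * ∫ θ in (0:ℝ)..(2 * Real.pi),
        (‖1 - (r : ℂ) * Complex.exp (θ * Complex.I)‖)⁻¹ =
      ∑' n : ℕ, ((4 : ℝ)⁻¹ ^ n * (Nat.choose (2 * n) n : ℝ)) ^ 2 * r ^ (2 * n) := by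
  simpa [multichoose_inv_two, Nat.centralBinom_eq_two_mul_choose, rpow_neg_one] using
    (stmt9_general 2⁻¹ r (by rwa [abs_of_pos hr0])).tsum_eq.symm
end

section
/- For every real r with 0 ≤ r < 1, Σ_{n=0}^{∞} (4^{−n}·C(2n,n))^2 · r^{2n} ≤ 1 + log(1/(1−r^2)), where C(2n,n) is the central binomial coefficient. -/
/-
The bound `n * centralBinom n ^ 2 ≤ 16 ^ n` is not inductive, but `(2 * n + 1) * centralBinom n ^ 2`
grows at each step by the factor `16 * (1 - 1 / (2 * n + 2) ^ 2) < 16`. Hence for `n ≥ 1` the `n`-th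
coefficient of the series is at most `1 / n`, so that `∑ x ^ n / n = -log (1 - x)`, taken at
`x = r ^ 2`, dominates everything but the constant term.
-/

theorem two_mul_add_one_mul_centralBinom_sq_le (n : ℕ) :
    (2 * n + 1) * n.centralBinom ^ 2 ≤ 16 ^ n := by
  induction n with
  | zero => simp
  | succ n ih =>
    have factor_le : (2 * n + 3) * (2 * n + 1) ≤ 4 * (n + 1) ^ 2 := by grind
    refine Nat.le_of_mul_le_mul_left (?_ : (n + 1) ^ 2 * _ ≤ (n + 1) ^ 2 * _) (by positivity)
    calc (n + 1) ^ 2 * ((2 * (n + 1) + 1) * (n + 1).centralBinom ^ 2)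
        = (2 * n + 3) * ((n + 1) * (n + 1).centralBinom) ^ 2 := by ring
      _ = 4 * ((2 * n + 3) * (2 * n + 1)) * ((2 * n + 1) * n.centralBinom ^ 2) := by
        rw [Nat.succ_mul_centralBinom_succ]
        ring
      _ ≤ 4 * (4 * (n + 1) ^ 2) * 16 ^ n := by gcongr
      _ = (n + 1) ^ 2 * 16 ^ (n + 1) := by ring

theorem mul_inv_four_pow_mul_centralBinom_sq_le_one (n : ℕ) :
    (n : ℝ) * ((4 : ℝ)⁻¹ ^ n * n.centralBinom) ^ 2 ≤ 1 := by
  have nat_bound : n * n.centralBinom ^ 2 ≤ 16 ^ n :=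
    (Nat.mul_le_mul_right _ (by lia)).trans (two_mul_add_one_mul_centralBinom_sq_le n)
  have sixteen_pow : (16 : ℝ) ^ n = (4 ^ n) ^ 2 := by
    rw [pow_right_comm]
    norm_num
  calc (n : ℝ) * ((4 : ℝ)⁻¹ ^ n * n.centralBinom) ^ 2
      = (n * n.centralBinom ^ 2 : ℝ) / 16 ^ n := by
        rw [sixteen_pow, inv_pow]
        ring
    _ ≤ 1 := div_le_one_of_le₀ (mod_cast nat_bound) (by positivity)

theorem norm_tsum_mul_pow_le_sub_mul_log {A : Type*} [SeminormedRing A] {a : ℕ → A} {C : ℝ}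
    (ha : ∀ n : ℕ, n * ‖a n‖ ≤ C) {z : A} (hz : ‖z‖ < 1) :
    ‖∑' n, a n * z ^ n‖ ≤ ‖a 0‖ - C * Real.log (1 - ‖z‖) := by
  let majorant : ℕ → ℝ
    | 0 => ‖a 0‖
    | n + 1 => C * (‖z‖ ^ (n + 1) / (n + 1))
  have hasSum_majorant : HasSum majorant (‖a 0‖ - C * Real.log (1 - ‖z‖)) := by
    have log_series := Real.hasSum_pow_div_log_of_abs_lt_one (x := ‖z‖) (by rwa [abs_norm])
    simpa only [mul_neg, ← sub_eq_add_neg] using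
      HasSum.zero_add (f := majorant) (log_series.mul_left C)
  refine tsum_of_norm_bounded hasSum_majorant fun n ↦ ?_
  cases n with
  | zero => simp [majorant]
  | succ n =>
    have coeff_le : ‖a (n + 1)‖ ≤ C / (n + 1) := by
      rw [le_div_iff₀' (by positivity)]
      exact_mod_cast ha (n + 1)
    calc ‖a (n + 1) * z ^ (n + 1)‖
        ≤ ‖a (n + 1)‖ * ‖z ^ (n + 1)‖ := norm_mul_le _ _
      _ ≤ C / (n + 1) * ‖z‖ ^ (n + 1) := by
        gcongr
        · exact (norm_nonneg _).trans coeff_le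
        · exact norm_pow_le' z n.succ_pos
      _ = C * (‖z‖ ^ (n + 1) / (n + 1)) := by ring

theorem stmt10_general (r : ℝ) (hr : |r| < 1) :
    ∑' n : ℕ, ((4 : ℝ)⁻¹ ^ n * (Nat.choose (2 * n) n : ℝ)) ^ 2 * r ^ (2 * n) ≤
      1 + Real.log (1 / (1 - r ^ 2)) := by
  have norm_sq_lt_one : ‖r ^ 2‖ < 1 := by
    simpa only [norm_pow, Real.norm_eq_abs] using pow_lt_one₀ (abs_nonneg r) hr two_ne_zero
  have coeff_bound (n : ℕ) : n * ‖((4 : ℝ)⁻¹ ^ n * (Nat.choose (2 * n) n : ℝ)) ^ 2‖ ≤ 1 := by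
    simpa only [Real.norm_of_nonneg (sq_nonneg _), Nat.centralBinom_eq_two_mul_choose] using
      mul_inv_four_pow_mul_centralBinom_sq_le_one n
  simp only [pow_mul r 2]
  refine (Real.le_norm_self _).trans
    ((norm_tsum_mul_pow_le_sub_mul_log coeff_bound norm_sq_lt_one).trans_eq ?_)
  simp [sub_eq_add_neg]

theorem stmt10 (r : ℝ) (hr0 : 0 ≤ r) (hr1 : r < 1) :
    ∑' n : ℕ, ((4 : ℝ)⁻¹ ^ n * (Nat.choose (2 * n) n : ℝ)) ^ 2 * r ^ (2 * n) ≤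
      1 + Real.log (1 / (1 - r ^ 2)) :=
  stmt10_general r (by rwa [abs_of_nonneg hr0])
end
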